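/- arXiv:2109.07347 — 5 statements merged into one kernel-verified Lean document; each statement's English description precedes it below -/
import Mathlib

section
/- Let t ≥ 1 and let G be a simple graph of order n with minimum degree δ(G) ≥ t. If n ≥ max{6t+10, (t²+7t+8)/2} and the adjacency spectral radius satisfies λ(G) ≥ λ(K_t ∨ (K_{n−2t−1} ∪ (t+1)K₁)), then G is traceable, unless G = K_t ∨ (K_{n−2t−1} ∪ (t+1)K₁). -/
open Finset Matrix

/-- The signless Laplacian matrix `Q(G) = D(G) + A(G)` of a graph. -/
noncomputable def signlessLaplacian {V : Type*} [Fintype V] [DecidableEq V]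
    (G : SimpleGraph V) [DecidableRel G.Adj] : Matrix V V ℝ :=
  Matrix.diagonal (fun v => (G.degree v : ℝ)) + G.adjMatrix ℝ

/-- The Q-index (largest eigenvalue of the signless Laplacian). -/
noncomputable def qIndex {V : Type*} [Fintype V] [DecidableEq V]
    (G : SimpleGraph V) [DecidableRel G.Adj] : ℝ :=
  sSup {μ : ℝ | ∃ x : V → ℝ, x ≠ 0 ∧ signlessLaplacian G *ᵥ x = μ • x}

/-- The adjacency spectral radius (largest eigenvalue of the adjacency matrix). -/
noncomputable def adjSpecRad {V : Type*} [Fintype V] [DecidableEq V]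
    (G : SimpleGraph V) [DecidableRel G.Adj] : ℝ :=
  sSup {μ : ℝ | ∃ x : V → ℝ, x ≠ 0 ∧ G.adjMatrix ℝ *ᵥ x = μ • x}

/-- A graph is `k`-path-coverable if its vertex set can be covered by at most `k`
vertex-disjoint paths. -/
def PathCoverable {V : Type*} (G : SimpleGraph V) (k : ℕ) : Prop :=
  ∃ (m : ℕ) (P : Fin m → Σ (u : V) (v : V), G.Walk u v),
    m ≤ k ∧
    (∀ i, (P i).2.2.IsPath) ∧
    (∀ v : V, ∃ i, v ∈ (P i).2.2.support) ∧
    (∀ i j, i ≠ j → ∀ v, v ∈ (P i).2.2.support → v ∉ (P j).2.2.support)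

/-- A graph is traceable if it has a Hamilton path. -/
def Traceable {V : Type*} (G : SimpleGraph V) : Prop :=
  ∃ (u v : V) (p : G.Walk u v), p.IsPath ∧ ∀ w, w ∈ p.support

/-- `B(n,k,δ) = K_δ ∨ (K_{n-2δ-k} ∪ complement K_{δ+k})`: the first `δ` vertices form the
dominating clique `Y`, the next `n-2δ-k` vertices form the clique `Z`, and the
last `δ+k` vertices form the independent set `X`. -/
def Bgraph (n k δ : ℕ) : SimpleGraph (Fin n) where
  Adj i j := i ≠ j ∧ ((i : ℕ) < δ ∨ (j : ℕ) < δ ∨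
      ((i : ℕ) < n - (δ + k) ∧ (j : ℕ) < n - (δ + k)))
  symm := by
    refine ⟨?_⟩
    rintro i j ⟨hne, h⟩
    exact ⟨hne.symm, by tauto⟩
  loopless := by
    refine ⟨?_⟩
    rintro i ⟨h, -⟩
    exact h rfl

instance (n k δ : ℕ) : DecidableRel (Bgraph n k δ).Adj := fun i j =>
  inferInstanceAs (Decidable (i ≠ j ∧ ((i : ℕ) < δ ∨ (j : ℕ) < δ ∨
      ((i : ℕ) < n - (δ + k) ∧ (j : ℕ) < n - (δ + k)))))

instance {n : ℕ} (G : SimpleGraph (Fin n)) [DecidableRel G.Adj]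
    (E' : Finset (Sym2 (Fin n))) : DecidableRel (G.deleteEdges ↑E').Adj := fun a b =>
  decidable_of_iff (G.Adj a b ∧ s(a, b) ∉ E') (by simp)

/-- The edge set `E₁` of `B(n,k,δ)`: edges with both endpoints in `Y ∪ Z`. -/
def IsE1Edge (n k δ : ℕ) (e : Sym2 (Fin n)) : Prop :=
  e ∈ (Bgraph n k δ).edgeSet ∧ ∀ v ∈ e, (v : ℕ) < n - (δ + k)

/-- The family `𝓑₁(n,k,δ)`, up to isomorphism. -/
def InB1 (n k δ : ℕ) (G : SimpleGraph (Fin n)) : Prop :=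
  ∃ E' : Finset (Sym2 (Fin n)),
    (∀ e ∈ E', IsE1Edge n k δ e) ∧ E'.card ≤ δ * (δ + k) / 4 ∧
    Nonempty (G ≃g (Bgraph n k δ).deleteEdges ↑E')

/-- The family `𝓑₂(n,k,δ)`, up to isomorphism. -/
def InB2 (n k δ : ℕ) (G : SimpleGraph (Fin n)) : Prop :=
  ∃ E' : Finset (Sym2 (Fin n)),
    (∀ e ∈ E', IsE1Edge n k δ e) ∧ E'.card = δ * (δ + k) / 4 + 1 ∧
    Nonempty (G ≃g (Bgraph n k δ).deleteEdges ↑E')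

lemma ray_eq_aux {V : Type*} [Fintype V] [DecidableEq V] (A : Matrix V V ℝ) (hA : A.IsHermitian)
    (μ : ℝ) (hR : ∀ x : V → ℝ, x ⬝ᵥ (A *ᵥ x) ≤ μ * (x ⬝ᵥ x)) (f : V → ℝ)
    (hf : f ⬝ᵥ (A *ᵥ f) = μ * (f ⬝ᵥ f)) : A *ᵥ f = μ • f := by
  have hform : ∀ x : V → ℝ, x ⬝ᵥ ((μ • (1 : Matrix V V ℝ) - A) *ᵥ x) =
      μ * (x ⬝ᵥ x) - x ⬝ᵥ (A *ᵥ x) := by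
    intro x
    rw [Matrix.sub_mulVec, dotProduct_sub, Matrix.smul_mulVec, Matrix.one_mulVec, dotProduct_smul,
      smul_eq_mul]
  have hpsd : (μ • (1 : Matrix V V ℝ) - A).PosSemidef := by
    apply Matrix.PosSemidef.of_dotProduct_mulVec_nonneg
    · apply Matrix.IsHermitian.sub _ hA
      ext i j
      simp [Matrix.one_apply, eq_comm]
    · intro x
      rw [star_trivial, hform]
      linarith [hR x]
  have h0 := (hpsd.dotProduct_mulVec_zero_iff f).1 (by rw [star_trivial, hform]; linarith)
  rw [Matrix.sub_mulVec, Matrix.smul_mulVec, Matrix.one_mulVec, sub_eq_zero] at h0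
  exact h0.symm

lemma spec_exists {V : Type*} [Fintype V] [DecidableEq V] [Nonempty V]
    (G : SimpleGraph V) [DecidableRel G.Adj] :
    ∃ f : V → ℝ, (∀ v, 0 ≤ f v) ∧ f ≠ 0 ∧ G.adjMatrix ℝ *ᵥ f = adjSpecRad G • f ∧
      ∀ x : V → ℝ, x ⬝ᵥ (G.adjMatrix ℝ *ᵥ x) ≤ adjSpecRad G * (x ⬝ᵥ x) := by
  set A := G.adjMatrix ℝ with hAdef
  have hA : A.IsHermitian := by
    ext i j
    simp [hAdef, SimpleGraph.adjMatrix_apply, G.adj_comm]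
  have hAnn : ∀ i j, 0 ≤ A i j := by
    intro i j
    rw [hAdef, SimpleGraph.adjMatrix_apply]
    split_ifs <;> norm_num
  let S : Set (V → ℝ) := {x | x ⬝ᵥ x = 1}
  have hc1 : Continuous fun x : V → ℝ => x ⬝ᵥ x := by
    simp only [dotProduct]; fun_prop
  have hc2 : Continuous fun x : V → ℝ => x ⬝ᵥ (A *ᵥ x) := by
    simp only [dotProduct, Matrix.mulVec]; fun_prop
  have hcl : IsClosed S := isClosed_eq hc1 continuous_const
  have hS : IsCompact S := by
    apply Metric.isCompact_of_isClosed_isBounded hcl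
    apply (Metric.isBounded_closedBall (x := (0 : V → ℝ)) (r := 1)).subset
    intro x hx
    rw [mem_closedBall_zero_iff, pi_norm_le_iff_of_nonneg zero_le_one]
    intro i
    have hx' : ∑ i, x i * x i = 1 := hx
    have := Finset.single_le_sum (f := fun i => x i * x i)
      (fun i _ => mul_self_nonneg (x i)) (Finset.mem_univ i)
    rw [Real.norm_eq_abs, abs_le]
    constructor <;> nlinarith
  have hSne : S.Nonempty := by
    obtain ⟨v⟩ := ‹Nonempty V›
    refine ⟨Pi.single v 1, ?_⟩
    show _ = _
    simp
  obtain ⟨x0, hx0, hmax⟩ := hS.exists_isMaxOn hSne hc2.continuousOn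
  let f : V → ℝ := fun v => |x0 v|
  have hff : f ⬝ᵥ f = 1 := by
    have : x0 ⬝ᵥ x0 = 1 := hx0
    rw [← this]
    simp [dotProduct, f]
  have hfge : x0 ⬝ᵥ (A *ᵥ x0) ≤ f ⬝ᵥ (A *ᵥ f) := by
    simp only [dotProduct, Matrix.mulVec, Finset.mul_sum]
    apply Finset.sum_le_sum; intro i _
    apply Finset.sum_le_sum; intro j _
    calc x0 i * (A i j * x0 j) ≤ |x0 i * (A i j * x0 j)| := le_abs_self _
      _ = f i * (A i j * f j) := by
        rw [abs_mul, abs_mul, abs_of_nonneg (hAnn i j)]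
  set μ := f ⬝ᵥ (A *ᵥ f) with hμ
  have hR : ∀ x : V → ℝ, x ⬝ᵥ (A *ᵥ x) ≤ μ * (x ⬝ᵥ x) := by
    intro x
    by_cases hx : x = 0
    · subst hx; simp
    have hpos : 0 < x ⬝ᵥ x := by
      have h1 : 0 ≤ x ⬝ᵥ x := Finset.sum_nonneg fun i _ => mul_self_nonneg (x i)
      rcases h1.lt_or_eq with h | h
      · exact h
      · exact absurd (dotProduct_self_eq_zero.1 h.symm) hx
    set r := Real.sqrt (x ⬝ᵥ x) with hr
    have hrp : 0 < r := Real.sqrt_pos.2 hpos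
    have hr2 : r * r = x ⬝ᵥ x := Real.mul_self_sqrt hpos.le
    have hy : (r⁻¹ • x) ∈ S := by
      show (r⁻¹ • x) ⬝ᵥ (r⁻¹ • x) = 1
      rw [smul_dotProduct, dotProduct_smul, ← hr2]
      simp only [smul_eq_mul]
      field_simp
    have h2 := (hmax hy)
    simp only [Set.mem_ofPred_eq, Matrix.mulVec_smul, smul_dotProduct, dotProduct_smul,
      smul_eq_mul] at h2
    have h3 : r⁻¹ * (r⁻¹ * (x ⬝ᵥ (A *ᵥ x))) ≤ μ := h2.trans hfge
    have h4 : x ⬝ᵥ (A *ᵥ x) = (r * r) * (r⁻¹ * (r⁻¹ * (x ⬝ᵥ (A *ᵥ x)))) := by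
      field_simp
    rw [h4, ← hr2, mul_comm μ]
    exact mul_le_mul_of_nonneg_left h3 (by positivity)
  have hfne : f ≠ 0 := by
    intro h
    rw [h] at hff
    simp at hff
  have hev : A *ᵥ f = μ • f := ray_eq_aux A hA μ hR f (by rw [hff, mul_one])
  have hspec : adjSpecRad G = μ := by
    apply IsGreatest.csSup_eq
    refine ⟨⟨f, hfne, hev⟩, ?_⟩
    rintro ν ⟨x, hx, hxe⟩
    have hpos : 0 < x ⬝ᵥ x := by
      have h1 : 0 ≤ x ⬝ᵥ x := Finset.sum_nonneg fun i _ => mul_self_nonneg (x i)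
      rcases h1.lt_or_eq with h | h
      · exact h
      · exact absurd (dotProduct_self_eq_zero.1 h.symm) hx
    have := hR x
    rw [hxe, dotProduct_smul, smul_eq_mul] at this
    exact le_of_mul_le_mul_right this hpos
  rw [hspec]
  exact ⟨f, fun v => abs_nonneg _, hfne, hev, hR⟩

lemma traceable_of_list {V : Type*} (G : SimpleGraph V) (l : List V) (hne : l ≠ [])
    (hc : l.IsChain G.Adj) (hnd : l.Nodup) (hm : ∀ v, v ∈ l) : Traceable G := by
  refine ⟨_, _, SimpleGraph.Walk.ofSupport l hne hc, ?_, ?_⟩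
  · apply SimpleGraph.Walk.IsPath.mk'
    rw [SimpleGraph.Walk.support_ofSupport]
    exact hnd
  · intro w
    rw [SimpleGraph.Walk.support_ofSupport]
    exact hm w

lemma list_of_traceable {V : Type*} (G : SimpleGraph V) (h : Traceable G) :
    ∃ l : List V, l.IsChain G.Adj ∧ l.Nodup ∧ ∀ v, v ∈ l := by
  obtain ⟨u, v, p, hp, hm⟩ := h
  exact ⟨p.support, p.isChain_adj_support, hp.support_nodup, hm⟩

lemma count_aux {V : Type*} (P Q : V → Prop) [DecidablePred P] [DecidablePred Q] (l : List V) :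
    ∀ a, (a :: l).IsChain (fun a b => ¬ (P a ∧ Q b)) →
      (∀ x ∈ (a :: l).getLast?, ¬ P x) →
      (a :: l).countP (fun x => decide (P x)) + l.countP (fun x => decide (Q x)) ≤ l.length := by
  induction l with
  | nil =>
    intro a _ h
    have := h a (by simp)
    simp [this]
  | cons b l ih =>
    intro a hc hl
    rw [List.isChain_cons_cons] at hc
    have h1 := ih b hc.2 (by
      intro x hx
      apply hl x
      simpa using hx)
    have h2 := hc.1
    rw [List.countP_cons (a := a), List.countP_cons (a := b) (p := fun x => decide (Q x)),
      List.length_cons]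
    by_cases hP : P a
    · have hQ : ¬ Q b := fun h => h2 ⟨hP, h⟩
      simp only [hP, hQ, decide_true, decide_false, if_true]
      simp
      omega
    · simp only [hP, decide_false]
      split_ifs <;> simp at * <;> omega

lemma count_full {V : Type*} [Fintype V] [DecidableEq V] (G : SimpleGraph V) [DecidableRel G.Adj]
    (l : List V) (hnd : l.Nodup) (hm : ∀ v, v ∈ l) (u : V) :
    l.countP (fun x => decide (G.Adj u x)) = G.degree u := by
  rw [List.countP_eq_length_filter, ← List.toFinset_card_of_nodup (hnd.filter _),
    ← SimpleGraph.card_neighborFinset_eq_degree]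
  congr 1
  ext x
  simp [hm]

lemma ore_core {V : Type*} [Fintype V] [DecidableEq V] (H : SimpleGraph V) [DecidableRel H.Adj]
    (hH : ¬ Traceable H) (u v : V) (huv : ¬ H.Adj u v) (l₁ l₂ : List V)
    (hL : (l₁ ++ [u]).IsChain H.Adj) (hR : (v :: l₂).IsChain H.Adj)
    (hnd : (l₁ ++ u :: v :: l₂).Nodup) (hm : ∀ w, w ∈ l₁ ++ u :: v :: l₂) :
    H.degree u + H.degree v + 2 ≤ Fintype.card V := by
  have key : ∀ l : List V, l.Perm (l₁ ++ u :: v :: l₂) → ¬ l.IsChain H.Adj := by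
    intro l hp hc
    apply hH
    apply traceable_of_list H l _ hc (hp.nodup_iff.2 hnd) (fun w => hp.mem_iff.2 (hm w))
    rintro rfl
    simpa using hp.length_eq
  have hlen : (l₁ ++ u :: v :: l₂).length = Fintype.card V := by
    rw [← List.toFinset_card_of_nodup hnd, Fintype.card]
    congr 1
    ext w
    simp only [List.mem_toFinset, Finset.mem_univ, iff_true]
    exact hm w
  have rev : ∀ l : List V, l.IsChain H.Adj → l.reverse.IsChain H.Adj := by
    intro l hl
    rw [List.isChain_reverse]
    exact hl.imp fun a b h => h.symm
  have lastR : ∀ x ∈ (v :: l₂).getLast?, ¬ H.Adj u x := by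
    intro x hx hux
    apply key (l₁ ++ [u] ++ (v :: l₂).reverse)
    · rw [List.append_assoc]
      apply List.Perm.append_left
      exact List.Perm.cons _ (List.reverse_perm _)
    · apply hL.append (rev _ hR)
      intro a ha b hb
      simp only [List.getLast?_append, List.getLast?_singleton, Option.some_or,
        Option.mem_some_iff] at ha
      rw [List.head?_reverse] at hb
      have : b = x := Option.mem_unique hb hx
      subst this; subst ha; exact hux
  have headL : ∀ x ∈ (l₁ ++ [u]).head?, ¬ H.Adj v x := by
    intro x hx hvx
    apply key ((l₁ ++ [u]).reverse ++ (v :: l₂))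
    · have : l₁ ++ u :: v :: l₂ = (l₁ ++ [u]) ++ (v :: l₂) := by simp
      rw [this]
      exact List.Perm.append_right _ (List.reverse_perm _)
    · apply (rev _ hL).append hR
      intro a ha b hb
      rw [List.getLast?_reverse] at ha
      have : a = x := Option.mem_unique ha hx
      simp only [List.head?_cons, Option.mem_some_iff] at hb
      subst this; subst hb; exact hvx.symm
  have chL : (l₁ ++ [u]).IsChain (fun a b => ¬ (H.Adj u a ∧ H.Adj v b)) := by
    rw [List.isChain_iff_forall_rel_of_append_cons_cons]
    rintro a b A B hAB ⟨hua, hvb⟩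
    have hlast : (b :: B).getLast? = some u := by
      have := congrArg List.getLast? hAB
      simpa using this.symm
    rw [hAB] at hL
    have h1 := List.isChain_append_cons_cons.1 hL
    apply key ((A ++ [a]) ++ ((b :: B).reverse ++ (v :: l₂)))
    · have : l₁ ++ u :: v :: l₂ = (A ++ [a]) ++ ((b :: B) ++ (v :: l₂)) := by
        have : l₁ ++ u :: v :: l₂ = (l₁ ++ [u]) ++ (v :: l₂) := by simp
        rw [this, hAB]; simp
      rw [this]
      apply List.Perm.append_left
      exact List.Perm.append_right _ (List.reverse_perm _)
    · apply h1.1.append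
      · apply (rev _ h1.2.2).append hR
        intro x hx y hy
        rw [List.getLast?_reverse] at hx
        simp only [List.head?_cons, Option.mem_some_iff] at hx hy
        subst hx; subst hy; exact hvb.symm
      · intro x hx y hy
        rw [List.head?_append, List.head?_reverse, hlast] at hy
        simp at hx hy
        subst hx; subst hy; exact hua.symm
  have chR : (v :: l₂).IsChain (fun a b => ¬ (H.Adj u a ∧ H.Adj v b)) := by
    rw [List.isChain_iff_forall_rel_of_append_cons_cons]
    rintro a b A B hAB ⟨hua, hvb⟩
    have hhead : (A ++ [a]).head? = some v := by
      have := congrArg List.head? hAB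
      cases A <;> simp_all
    rw [hAB] at hR
    have h1 := List.isChain_append_cons_cons.1 hR
    apply key ((l₁ ++ [u]) ++ ((A ++ [a]).reverse ++ (b :: B)))
    · have : l₁ ++ u :: v :: l₂ = (l₁ ++ [u]) ++ ((A ++ [a]) ++ (b :: B)) := by
        have : l₁ ++ u :: v :: l₂ = (l₁ ++ [u]) ++ (v :: l₂) := by simp
        rw [this, hAB]; simp
      rw [this]
      apply List.Perm.append_left
      exact List.Perm.append_right _ (List.reverse_perm _)
    · apply hL.append
      · apply (rev _ h1.1).append h1.2.2
        intro x hx y hy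
        rw [List.getLast?_reverse, hhead] at hx
        simp only [List.head?_cons, Option.mem_some_iff] at hx hy
        subst hx; subst hy; exact hvb
      · intro x hx y hy
        simp at hx hy
        subst hx; subst hy; exact hua
  have cntR := count_aux (H.Adj u) (H.Adj v) l₂ v chR lastR
  have cntL : (l₁ ++ [u]).countP (fun x => decide (H.Adj u x)) +
      (l₁ ++ [u]).countP (fun x => decide (H.Adj v x)) + 1 ≤ (l₁ ++ [u]).length := by
    obtain ⟨a, l, hal⟩ : ∃ a l, l₁ ++ [u] = a :: l := by
      cases l₁ <;> simp
    have hlast : (a :: l).getLast? = some u := by rw [← hal]; simp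
    rw [hal] at chL headL ⊢
    have := count_aux (H.Adj u) (H.Adj v) l a chL (by
      rw [hlast]; intro x hx; simp at hx; subst hx; exact H.irrefl)
    have hva : ¬ H.Adj v a := headL a (by simp)
    rw [List.countP_cons (a := a) (p := fun x => decide (H.Adj v x))]
    simp only [hva, decide_false, List.length_cons]
    simp
    omega
  rw [← count_full H _ hnd hm u, ← count_full H _ hnd hm v, ← hlen]
  have e : l₁ ++ u :: v :: l₂ = (l₁ ++ [u]) ++ (v :: l₂) := by simp
  rw [e, List.countP_append (l₁ := l₁ ++ [u]), List.countP_append (l₁ := l₁ ++ [u]),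
    List.length_append (as := l₁ ++ [u]),
    List.countP_cons (a := v) (p := fun x => decide (H.Adj v x)), List.length_cons]
  simp only [H.irrefl, decide_false]
  simp at cntL cntR ⊢
  omega

lemma ore_step {V : Type*} [Fintype V] [DecidableEq V] (H : SimpleGraph V) [DecidableRel H.Adj]
    (hH : ¬ Traceable H) (hV : Nonempty V) (u v : V) (huv : ¬ H.Adj u v)
    (ht : Traceable (H ⊔ SimpleGraph.edge u v)) :
    H.degree u + H.degree v + 2 ≤ Fintype.card V := by
  obtain ⟨l, hc, hnd, hm⟩ := list_of_traceable _ ht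
  have hnc : ¬ l.IsChain H.Adj := by
    intro h
    refine hH (traceable_of_list H l ?_ h hnd hm)
    rintro rfl
    obtain ⟨w⟩ := hV
    simpa using hm w
  rw [List.isChain_iff_forall_rel_of_append_cons_cons] at hnc
  push Not at hnc
  obtain ⟨a, b, A, B, rfl, hab⟩ := hnc
  have h1 := List.isChain_append_cons_cons.1 hc
  have hadj : ∀ c d, (H ⊔ SimpleGraph.edge u v).Adj c d →
      H.Adj c d ∨ (c = u ∧ d = v) ∨ (c = v ∧ d = u) := by
    intro c d h
    rw [SimpleGraph.sup_adj, SimpleGraph.edge_adj] at h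
    tauto
  have hab' := (hadj a b h1.2.1).resolve_left hab
  have hset : ∀ c d, (H ⊔ SimpleGraph.edge u v).Adj c d →
      H.Adj c d ∨ (c = a ∧ d = b) ∨ (c = b ∧ d = a) := by
    intro c d h
    rcases hadj c d h with h | h | h <;> rcases hab' with h' | h' <;> simp [h, h'] 
  have hnd' := hnd
  rw [List.nodup_append] at hnd'
  simp only [List.nodup_cons, List.mem_cons] at hnd'
  have hL : (A ++ [a]).IsChain H.Adj := by
    apply h1.1.imp_of_mem_imp
    intro c d hcm hdm h
    have hbA : b ∉ A ++ [a] := by grind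
    rcases hset c d h with h | h | h
    · exact h
    · exact absurd (h.2 ▸ hdm) hbA
    · exact absurd (h.1 ▸ hcm) hbA
  have hR : (b :: B).IsChain H.Adj := by
    apply h1.2.2.imp_of_mem_imp
    intro c d hcm hdm h
    have hbA : a ∉ b :: B := by grind
    rcases hset c d h with h | h | h
    · exact h
    · exact absurd (h.1 ▸ hcm) hbA
    · exact absurd (h.2 ▸ hdm) hbA
  have := ore_core H hH a b hab A B hL hR hnd hm
  rcases hab' with ⟨rfl, rfl⟩ | ⟨rfl, rfl⟩ <;> omega

lemma traceable_top {V : Type*} [Fintype V] [Nonempty V] : Traceable (⊤ : SimpleGraph V) := by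
  classical
  apply traceable_of_list _ (Finset.univ : Finset V).toList
  · simp [Finset.univ_nonempty.ne_empty]
  · have := Finset.nodup_toList (Finset.univ : Finset V)
    exact List.Pairwise.isChain this
  · exact Finset.nodup_toList _
  · simp

lemma chvatal {V : Type*} [Fintype V] [DecidableEq V] [Nonempty V]
    (G : SimpleGraph V) [DecidableRel G.Adj] (hG : ¬ Traceable G) :
    ∃ h : ℕ, 2 * h + 2 ≤ Fintype.card V ∧
      h + 1 ≤ #{w : V | G.degree w ≤ h} ∧
      Fintype.card V - h ≤ #{w : V | G.degree w + h + 2 ≤ Fintype.card V} := by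
  classical
  obtain ⟨H, hGH, hmax⟩ := (Set.toFinite {H : SimpleGraph V | ¬ Traceable H}).exists_le_maximal hG
  have hH : ¬ Traceable H := hmax.prop
  have hsat : ∀ u v, u ≠ v → ¬ H.Adj u v → H.degree u + H.degree v + 2 ≤ Fintype.card V := by
    intro u v hne huv
    apply ore_step H hH inferInstance u v huv
    by_contra hcon
    have h2 := hmax.le_of_ge (y := H ⊔ SimpleGraph.edge u v) hcon le_sup_left
    apply huv
    apply h2
    simp [SimpleGraph.edge_adj, hne]
  let S : Finset (V × V) := {p | p.1 ≠ p.2 ∧ ¬ H.Adj p.1 p.2}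
  have hS : S.Nonempty := by
    by_contra hcon
    apply hH
    have : H = ⊤ := by
      ext a b
      simp only [SimpleGraph.top_adj]
      refine ⟨fun h => h.ne, fun h => ?_⟩
      by_contra hab
      exact hcon ⟨(a, b), by simp [S, h, hab]⟩
    rw [this]
    exact traceable_top
  obtain ⟨⟨u₀, v₀⟩, hmem, hbest⟩ := S.exists_max_image (fun p => H.degree p.1 + H.degree p.2) hS
  obtain ⟨u, v, hne, huv, hle, hb⟩ : ∃ u v, u ≠ v ∧ ¬ H.Adj u v ∧ H.degree u ≤ H.degree v ∧
      ∀ a b, a ≠ b → ¬ H.Adj a b → H.degree a + H.degree b ≤ H.degree u + H.degree v := by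
    simp only [S, Finset.mem_filter, Finset.mem_univ, true_and] at hmem hbest
    rcases le_total (H.degree u₀) (H.degree v₀) with h | h
    · exact ⟨u₀, v₀, hmem.1, hmem.2, h, fun a b h1 h2 => hbest (a, b) ⟨h1, h2⟩⟩
    · refine ⟨v₀, u₀, hmem.1.symm, fun h => hmem.2 h.symm, h, fun a b h1 h2 => ?_⟩
      have := hbest (a, b) ⟨h1, h2⟩
      simp only at this
      omega
  have hsum := hsat u v hne huv
  have hdeg : ∀ w, G.degree w ≤ H.degree w := fun w => SimpleGraph.degree_le_of_le hGH
  have hnon : ∀ w : V, #{x : V | x ≠ w ∧ ¬ H.Adj w x} + H.degree w + 1 = Fintype.card V := by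
    intro w
    have h1 : (Finset.univ : Finset V) = Finset.univ.filter (fun x : V => x ≠ w ∧ ¬ H.Adj w x) ∪
        (insert w (H.neighborFinset w)) := by
      ext x
      simp
      tauto
    have h2 := congrArg Finset.card h1
    rw [Finset.card_union_of_disjoint, Finset.card_insert_of_notMem (by simp),
      SimpleGraph.card_neighborFinset_eq_degree, Finset.card_univ] at h2
    · omega
    · rw [Finset.disjoint_left]
      intro x hx
      simp at hx ⊢
      tauto
  refine ⟨H.degree u, by omega, ?_, ?_⟩
  · have : #{x : V | x ≠ v ∧ ¬ H.Adj v x} ≤ #{w : V | G.degree w ≤ H.degree u} := by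
      apply Finset.card_le_card
      intro x hx
      simp only [Finset.mem_filter, Finset.mem_univ, true_and] at hx ⊢
      have := hb x v hx.1 (fun h => hx.2 h.symm)
      have := hdeg x
      omega
    have := hnon v
    omega
  · have : #(insert u (Finset.univ.filter (fun x : V => x ≠ u ∧ ¬ H.Adj u x))) ≤
        #{w : V | G.degree w + H.degree u + 2 ≤ Fintype.card V} := by
      apply Finset.card_le_card
      intro x hx
      simp only [Finset.mem_insert, Finset.mem_filter, Finset.mem_univ, true_and] at hx ⊢
      have h3 := hdeg x
      rcases hx with rfl | hx
      · omega
      · have := hb u x hx.1.symm hx.2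
        omega
    rw [Finset.card_insert_of_notMem (by simp)] at this
    have := hnon u
    omega

lemma adj_isHermitian {V : Type*} [Fintype V] [DecidableEq V] (G : SimpleGraph V)
    [DecidableRel G.Adj] : (G.adjMatrix ℝ).IsHermitian := by
  ext i j
  simp [SimpleGraph.adjMatrix_apply, G.adj_comm]

lemma card_fin_lt (n m : ℕ) (h : m ≤ n) : #{i : Fin n | (i : ℕ) < m} = m := by
  rw [Fin.card_filter_val_lt]
  omega

lemma Bgraph_adj_iff (n k d : ℕ) (i j : Fin n) : (Bgraph n k d).Adj i j ↔
    (i ≠ j ∧ ((i : ℕ) < d ∨ (j : ℕ) < d ∨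
      ((i : ℕ) < n - (d + k) ∧ (j : ℕ) < n - (d + k)))) := Iff.rfl

lemma lamB (n t : ℕ) (ht : 1 ≤ t) (hn : 6 * t + 10 ≤ n) :
    (n : ℝ) - t - 2 < adjSpecRad (Bgraph n 1 t) := by
  have : Nonempty (Fin n) := ⟨⟨0, by omega⟩⟩
  obtain ⟨f, hf0, hfne, hfe, hR⟩ := spec_exists (Bgraph n 1 t)
  set K : Finset (Fin n) := {i : Fin n | (i : ℕ) < n - (t + 1)} with hK
  have hKc : #K = n - (t + 1) := card_fin_lt n _ (by omega)
  set x : Fin n → ℝ := fun i => if i ∈ K then 1 else 0 with hx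
  have hAx : ∀ i, ((Bgraph n 1 t).adjMatrix ℝ *ᵥ x) i =
      (#((Bgraph n 1 t).neighborFinset i ∩ K) : ℝ) := by
    intro i
    rw [SimpleGraph.adjMatrix_mulVec_apply, hx]
    simp [Finset.filter_mem_eq_inter]
  have hAK : ∀ i ∈ K, ((Bgraph n 1 t).adjMatrix ℝ *ᵥ x) i = (n : ℝ) - t - 2 := by
    intro i hi
    rw [hAx]
    have : (Bgraph n 1 t).neighborFinset i ∩ K = K.erase i := by
      ext j
      simp only [hK, Finset.mem_filter, Finset.mem_univ, true_and] at hi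
      simp only [hK, Finset.mem_inter, SimpleGraph.mem_neighborFinset, Bgraph_adj_iff, Finset.mem_filter,
        Finset.mem_univ, true_and, Finset.mem_erase, ne_eq]
      constructor
      · rintro ⟨⟨h1, -⟩, h2⟩
        exact ⟨fun h => h1 h.symm, h2⟩
      · rintro ⟨h1, h2⟩
        exact ⟨⟨fun h => h1 h.symm, Or.inr (Or.inr ⟨hi, h2⟩)⟩, h2⟩
    rw [this, Finset.card_erase_of_mem hi, hKc]
    have : n - (t + 1) - 1 = n - (t + 2) := by omega
    rw [this, Nat.cast_sub (by omega)]
    push_cast; ring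
  have hxx : x ⬝ᵥ x = (n : ℝ) - t - 1 := by
    simp only [dotProduct, hx]
    simp only [mul_ite, mul_one, mul_zero]
    rw [Finset.sum_congr rfl (g := fun i => if i ∈ K then (1:ℝ) else 0)
      (by intro i _; split_ifs <;> rfl)]
    rw [Finset.sum_ite_mem, Finset.univ_inter, Finset.sum_const, hKc, nsmul_eq_mul,
      Nat.cast_sub (by omega)]
    push_cast; ring
  have hxAx : x ⬝ᵥ ((Bgraph n 1 t).adjMatrix ℝ *ᵥ x) = ((n : ℝ) - t - 2) * (x ⬝ᵥ x) := by
    simp only [dotProduct, Finset.mul_sum]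
    apply Finset.sum_congr rfl
    intro i _
    by_cases hi : i ∈ K
    · rw [hAK i hi]; simp [hx, hi]
    · simp [hx, hi]
  have hnR : (6 * t + 10 : ℝ) ≤ n := by exact_mod_cast hn
  have htR : (1 : ℝ) ≤ t := by exact_mod_cast ht
  have hpos : 0 < x ⬝ᵥ x := by rw [hxx]; linarith
  have hle : (n : ℝ) - t - 2 ≤ adjSpecRad (Bgraph n 1 t) := by
    have := hR x
    rw [hxAx] at this
    exact le_of_mul_le_mul_right this hpos
  rcases hle.lt_or_eq with h | h
  · exact h
  exfalso
  have hev := ray_eq_aux _ (adj_isHermitian _) _ hR x (by rw [← h]; exact hxAx)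
  let w : Fin n := ⟨n - 1, by omega⟩
  let z : Fin n := ⟨0, by omega⟩
  have h1 := congrFun hev w
  have hw : w ∉ K := by simp [hK, w]; omega
  rw [hAx] at h1
  simp only [Pi.smul_apply, hx, hw, if_false, smul_zero, Nat.cast_eq_zero,
    Finset.card_eq_zero] at h1
  have : z ∈ (Bgraph n 1 t).neighborFinset w ∩ K := by
    simp only [Finset.mem_inter, SimpleGraph.mem_neighborFinset, Bgraph_adj_iff, hK, Finset.mem_filter,
      Finset.mem_univ, true_and, z, w, ne_eq, Fin.mk.injEq]
    omega
  rw [h1] at this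
  simp at this

lemma edge_bound {V : Type*} [Fintype V] [DecidableEq V] (G : SimpleGraph V)
    [DecidableRel G.Adj] (t : ℕ) (hmin : ∀ v, t ≤ G.degree v) (f : V → ℝ) (hf : ∀ v, 0 ≤ f v)
    (hne : f ≠ 0) (μ : ℝ) (hev : G.adjMatrix ℝ *ᵥ f = μ • f) :
    μ ^ 2 - ((t : ℝ) - 1) * μ ≤ ∑ v, (G.degree v : ℝ) - ((Fintype.card V : ℝ) - 1) * t := by
  have hS : 0 < ∑ v, f v := by
    obtain ⟨v, hv⟩ := Function.ne_iff.1 hne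
    exact Finset.sum_pos' (fun i _ => hf i) ⟨v, Finset.mem_univ v, lt_of_le_of_ne (hf v) (Ne.symm hv)⟩
  have swap : ∀ g : V → ℝ, μ * ∑ v, g v * f v =
      ∑ v, (∑ w ∈ G.neighborFinset v, g w) * f v := by
    intro g
    have h1 : g ⬝ᵥ (G.adjMatrix ℝ *ᵥ f) = μ * ∑ v, g v * f v := by
      rw [hev, dotProduct_smul, smul_eq_mul, dotProduct]
    rw [← h1, Matrix.dotProduct_mulVec, dotProduct]
    apply Finset.sum_congr rfl
    intro v _
    rw [SimpleGraph.adjMatrix_vecMul_apply]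
  have e1 := swap (fun _ => 1)
  have e2 := swap (fun v => (G.degree v : ℝ))
  simp only [one_mul, Finset.sum_const, SimpleGraph.card_neighborFinset_eq_degree, nsmul_eq_mul,
    mul_one] at e1
  set D := ∑ v, (G.degree v : ℝ) with hD
  have hb : ∀ v, (∑ w ∈ G.neighborFinset v, (G.degree w : ℝ)) ≤
      D - ((Fintype.card V : ℝ) - 1) * t + (t - 1) * G.degree v := by
    intro v
    have h1 : D = ∑ w ∈ G.neighborFinset v, (G.degree w : ℝ) +
        ∑ w ∈ (G.neighborFinset v)ᶜ, (G.degree w : ℝ) :=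
      (Finset.sum_add_sum_compl _ _).symm
    have hvm : v ∈ (G.neighborFinset v)ᶜ := by simp
    rw [← Finset.add_sum_erase _ _ hvm] at h1
    have h2 : (#((G.neighborFinset v)ᶜ.erase v) : ℝ) * t ≤
        ∑ w ∈ (G.neighborFinset v)ᶜ.erase v, (G.degree w : ℝ) := by
      rw [← nsmul_eq_mul]
      apply Finset.card_nsmul_le_sum
      intro w _
      exact_mod_cast hmin w
    have h3 : (#((G.neighborFinset v)ᶜ.erase v) : ℝ) = Fintype.card V - 1 - G.degree v := by
      have h4 : #((G.neighborFinset v)ᶜ.erase v) + 1 = #((G.neighborFinset v)ᶜ) :=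
        Finset.card_erase_add_one hvm
      have h5 := Finset.card_add_card_compl (G.neighborFinset v)
      rw [SimpleGraph.card_neighborFinset_eq_degree, ← h4] at h5
      rw [← h5]; push_cast; ring
    rw [h3] at h2
    linarith
  have h6 : ∑ v, (∑ w ∈ G.neighborFinset v, (G.degree w : ℝ)) * f v ≤
      ∑ v, (D - ((Fintype.card V : ℝ) - 1) * t + (t - 1) * G.degree v) * f v :=
    Finset.sum_le_sum fun v _ => mul_le_mul_of_nonneg_right (hb v) (hf v)
  have h7 : ∑ v, (D - ((Fintype.card V : ℝ) - 1) * t + (t - 1) * G.degree v) * f v =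
      (D - ((Fintype.card V : ℝ) - 1) * t) * ∑ v, f v +
        (t - 1) * ∑ v, (G.degree v : ℝ) * f v := by
    rw [Finset.mul_sum, Finset.mul_sum, ← Finset.sum_add_distrib]
    apply Finset.sum_congr rfl; intro v _; ring
  rw [← e2, h7, ← e1] at h6
  apply le_of_mul_le_mul_right _ hS
  linarith

lemma deg_sum_bound {V : Type*} [Fintype V] [DecidableEq V] (G : SimpleGraph V)
    [DecidableRel G.Adj] (h : ℕ) (h0 : 2 * h + 2 ≤ Fintype.card V)
    (h1 : h + 1 ≤ #{w : V | G.degree w ≤ h})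
    (h2 : Fintype.card V - h ≤ #{w : V | G.degree w + h + 2 ≤ Fintype.card V}) :
    ∑ v, (G.degree v : ℝ) ≤ (Fintype.card V : ℝ) * (Fintype.card V - 1) -
      (h + 1) * (2 * Fintype.card V - 3 * h - 2) := by
  set n := Fintype.card V with hn
  have h0R : (2 * h + 2 : ℝ) ≤ n := by exact_mod_cast h0
  have h1R : (h + 1 : ℝ) ≤ (#{w : V | G.degree w ≤ h} : ℝ) := by exact_mod_cast h1
  have h2R : (n - h : ℝ) ≤ (#{w : V | G.degree w + h + 2 ≤ n} : ℝ) := by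
    rw [← Nat.cast_sub (by omega)]; exact_mod_cast h2
  have hp : ∀ v, (G.degree v : ℝ) ≤ (n - 1) - (if G.degree v + h + 2 ≤ n then ((h : ℝ) + 1) else 0)
      - (if G.degree v ≤ h then ((n : ℝ) - 2 * h - 2) else 0) := by
    intro v
    have hlt : G.degree v + 1 ≤ n := G.degree_lt_card_verts v
    split_ifs with ha hb hb
    · have : (G.degree v : ℝ) ≤ h := by exact_mod_cast hb
      linarith
    · have : (G.degree v + h + 2 : ℝ) ≤ n := by exact_mod_cast ha
      linarith
    · omega
    · have : (G.degree v + 1 : ℝ) ≤ n := by exact_mod_cast hlt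
      linarith
  have h3 := Finset.sum_le_sum fun v (_ : v ∈ Finset.univ) => hp v
  rw [Finset.sum_sub_distrib, Finset.sum_sub_distrib, ← Finset.sum_filter, ← Finset.sum_filter]
    at h3
  simp only [Finset.sum_const, nsmul_eq_mul, Finset.card_univ] at h3
  rw [← hn] at h3
  have h4 := mul_le_mul_of_nonneg_right h1R (by linarith : (0:ℝ) ≤ (n : ℝ) - 2 * h - 2)
  have h5 := mul_le_mul_of_nonneg_right h2R (by positivity : (0:ℝ) ≤ (h : ℝ) + 1)
  linarith

lemma numerics (t h n lam D : ℝ) (ht : 1 ≤ t) (hn1 : 6 * t + 10 ≤ n)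
    (hn2 : t ^ 2 + 7 * t + 8 ≤ 2 * n) (hh : t + 1 ≤ h) (hhn : 2 * h + 2 ≤ n)
    (hlam : n - t - 2 < lam) (h1 : lam ^ 2 - (t - 1) * lam ≤ D - (n - 1) * t)
    (h2 : D ≤ n * (n - 1) - (h + 1) * (2 * n - 3 * h - 2)) : False := by
  have a1 : (n - t - 2) * (n - 2 * t - 1) < lam ^ 2 - (t - 1) * lam := by
    nlinarith
  have a2 : 0 ≤ (h - t - 1) * (n - 2 - 2 * h) :=
    mul_nonneg (by linarith) (by linarith)
  have a3 : 0 ≤ (h - t - 1) * (n - 6 * t - 10) :=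
    mul_nonneg (by linarith) (by linarith)
  nlinarith

lemma exists_top {V : Type*} [Fintype V] [DecidableEq V] (f : V → ℝ) (t : ℕ) :
    t ≤ Fintype.card V → ∃ Y : Finset V, #Y = t ∧ ∀ y ∈ Y, ∀ z, z ∉ Y → f z ≤ f y := by
  induction t with
  | zero => intro _; exact ⟨∅, by simp⟩
  | succ t ih =>
    intro h
    obtain ⟨Y, hY, hYt⟩ := ih (by omega)
    have hne : (Yᶜ).Nonempty := by
      rw [← Finset.card_pos, Finset.card_compl]; omega
    obtain ⟨z, hz, hzm⟩ := Finset.exists_max_image Yᶜ f hne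
    rw [Finset.mem_compl] at hz
    refine ⟨insert z Y, by rw [Finset.card_insert_of_notMem hz, hY], ?_⟩
    intro y hy w hw
    rw [Finset.mem_insert, not_or] at hw
    rcases Finset.mem_insert.1 hy with rfl | hy
    · exact hzm w (Finset.mem_compl.2 hw.2)
    · exact hYt y hy w hw.2

lemma sum_le_top {V : Type*} [DecidableEq V] (f : V → ℝ) (hf : ∀ v, 0 ≤ f v)
    (Y N : Finset V) (hY : ∀ y ∈ Y, ∀ z, z ∉ Y → f z ≤ f y) (hN : #N ≤ #Y) :
    ∑ v ∈ N, f v ≤ ∑ v ∈ Y, f v := by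
  have e1 : ∑ v ∈ N, f v = ∑ v ∈ N ∩ Y, f v + ∑ v ∈ N \ Y, f v :=
    (Finset.sum_inter_add_sum_sdiff N Y f).symm
  have e2 : ∑ v ∈ Y, f v = ∑ v ∈ N ∩ Y, f v + ∑ v ∈ Y \ N, f v := by
    rw [Finset.inter_comm]; exact (Finset.sum_inter_add_sum_sdiff Y N f).symm
  have hc : #(N \ Y) ≤ #(Y \ N) := by
    have a1 := Finset.card_sdiff_add_card_inter N Y
    have a2 := Finset.card_sdiff_add_card_inter Y N
    rw [Finset.inter_comm] at a2
    omega
  rw [e1, e2]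
  gcongr 1
  rcases (Y \ N).eq_empty_or_nonempty with h | h
  · have : N \ Y = ∅ := by
      rw [h] at hc
      simpa using hc
    rw [h, this]
  · obtain ⟨m, hm, hmin⟩ := Finset.exists_min_image _ f h
    have b1 : ∑ v ∈ N \ Y, f v ≤ #(N \ Y) • f m := by
      apply Finset.sum_le_card_nsmul
      intro v hv
      exact hY m (Finset.mem_sdiff.1 hm).1 v (Finset.mem_sdiff.1 hv).2
    have b2 : #(Y \ N) • f m ≤ ∑ v ∈ Y \ N, f v := Finset.card_nsmul_le_sum _ _ _ hmin
    have b3 : #(N \ Y) • f m ≤ #(Y \ N) • f m := by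
      rw [nsmul_eq_mul, nsmul_eq_mul]
      exact mul_le_mul_of_nonneg_right (by exact_mod_cast hc) (hf m)
    linarith

lemma eq_of_sum_eq {V : Type*} [DecidableEq V] (f : V → ℝ) (hf : ∀ v, 0 < f v)
    (S T : Finset V) (h : S ⊆ T) (hs : ∑ v ∈ S, f v = ∑ v ∈ T, f v) : S = T := by
  apply Finset.Subset.antisymm h
  intro x hx
  by_contra hxS
  have : ∑ v ∈ S, f v < ∑ v ∈ T, f v :=
    Finset.sum_lt_sum_of_subset h hx hxS (hf x) (fun j _ _ => (hf j).le)
  linarith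

/-- A copy of `B(n,1,t)` with prescribed vertex classes. -/
def BXY {V : Type*} (X Y : Finset V) : SimpleGraph V where
  Adj a b := a ≠ b ∧ (a ∈ Y ∨ b ∈ Y ∨ (a ∉ X ∧ b ∉ X))
  symm := by
    refine ⟨?_⟩
    rintro i j ⟨hne, h⟩
    exact ⟨hne.symm, by tauto⟩
  loopless := by
    refine ⟨?_⟩
    rintro i ⟨h, -⟩
    exact h rfl

lemma BXY_adj {V : Type*} (X Y : Finset V) (a b : V) :
    (BXY X Y).Adj a b ↔ a ≠ b ∧ (a ∈ Y ∨ b ∈ Y ∨ (a ∉ X ∧ b ∉ X)) := Iff.rfl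

lemma BXY_iso (n t : ℕ) (hn : 6 * t + 10 ≤ n) (X Y : Finset (Fin n)) (hX : #X = t + 1)
    (hY : #Y = t) (hd : Disjoint X Y) : Nonempty (Bgraph n 1 t ≃g BXY X Y) := by
  let c : Fin n → Fin 3 := fun i => if (i : ℕ) < t then 0 else if (i : ℕ) < n - (t + 1) then 1 else 2
  let c' : Fin n → Fin 3 := fun a => if a ∈ Y then 0 else if a ∈ X then 2 else 1
  have hdd : ∀ a ∈ X, a ∉ Y := fun a ha hb => Finset.disjoint_left.1 hd ha hb
  have k0 : #{i : Fin n | c i = 0} = t := by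
    rw [← card_fin_lt n t (by omega)]
    congr 1; ext i
    simp only [Finset.mem_filter, Finset.mem_univ, true_and, c]
    split_ifs <;> simp_all
  have k1 : #{i : Fin n | c i = 1} + t = n - (t + 1) := by
    have kk := card_fin_lt n (n - (t + 1)) (by omega)
    suffices hs : #{i : Fin n | c i = 1} + #{i : Fin n | c i = 0} =
        #{i : Fin n | (i : ℕ) < n - (t + 1)} by omega
    rw [← Finset.card_union_of_disjoint]
    · congr 1; ext i
      simp only [Finset.mem_union, Finset.mem_filter, Finset.mem_univ, true_and, c]
      split_ifs <;> simp_all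
      omega
    · rw [Finset.disjoint_left]
      intro i hi
      simp only [Finset.mem_filter, Finset.mem_univ, true_and] at hi ⊢
      rw [hi]; decide
  have l0 : #{i : Fin n | c' i = 0} = t := by
    rw [← hY]
    congr 1; ext i
    simp only [Finset.mem_filter, Finset.mem_univ, true_and, c']
    split_ifs <;> simp_all
  have l2 : #{i : Fin n | c' i = 2} = t + 1 := by
    rw [← hX]
    congr 1; ext i
    have h2 := hdd i
    simp only [Finset.mem_filter, Finset.mem_univ, true_and, c']
    split_ifs with h3 h4
    · simp only [Fin.reduceEq, false_iff]
      exact fun h => h2 h h3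
    · simp [h4]
    · simp [h4]
  have tot : ∀ g : Fin n → Fin 3, #{i : Fin n | g i = 0} + #{i : Fin n | g i = 1} +
      #{i : Fin n | g i = 2} = n := by
    intro g
    have := Finset.card_eq_sum_card_fiberwise (f := g) (s := Finset.univ) (t := Finset.univ)
      (by intro x _; simp)
    rw [Fin.sum_univ_three] at this
    simpa using this.symm
  have t1 := tot c
  have t2 := tot c'
  have hcard : ∀ k, Fintype.card {a // c a = k} = Fintype.card {a // c' a = k} := by
    intro k
    rw [Fintype.card_subtype, Fintype.card_subtype]
    fin_cases k
    · exact k0.trans l0.symm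
    · show #{i : Fin n | c i = 1} = #{i : Fin n | c' i = 1}
      omega
    · show #{i : Fin n | c i = 2} = #{i : Fin n | c' i = 2}
      omega
  let e : Fin n ≃ Fin n := Equiv.ofFiberEquiv (f := c) (g := c')
    (fun k => Fintype.equivOfCardEq (hcard k))
  have he : ∀ i, c' (e i) = c i := fun i => Equiv.ofFiberEquiv_map _ i
  have heY : ∀ i, e i ∈ Y ↔ (i : ℕ) < t := by
    intro i
    have := he i
    simp only [c, c'] at this
    split_ifs at this <;> simp_all
  have heX : ∀ i, e i ∉ X ↔ (i : ℕ) < n - (t + 1) := by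
    intro i
    have := he i
    have h2 := hdd (e i)
    have h3 := heY i
    by_cases h4 : (i : ℕ) < t
    · have h5 := h3.2 h4
      exact ⟨fun _ => by omega, fun _ h => h2 h h5⟩
    · have h5 : e i ∉ Y := fun h => h4 (h3.1 h)
      simp only [c, c', h4, h5, if_false] at this
      split_ifs at this with h6 h7 h7
      · simp at this
      · simp [h6, h7]
      · simp [h6, h7]
      · simp at this
  refine ⟨⟨e, ?_⟩⟩
  intro i j
  rw [BXY_adj, Bgraph_adj_iff, heY, heY, heX, heX]
  simp

lemma iso_ray {V W : Type*} [Fintype V] [DecidableEq V] [Fintype W] [DecidableEq W]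
    (G : SimpleGraph V) (H : SimpleGraph W) [DecidableRel G.Adj] [DecidableRel H.Adj]
    (e : G ≃g H) (μ : ℝ) (hR : ∀ x : V → ℝ, x ⬝ᵥ (G.adjMatrix ℝ *ᵥ x) ≤ μ * (x ⬝ᵥ x))
    (x : W → ℝ) : x ⬝ᵥ (H.adjMatrix ℝ *ᵥ x) ≤ μ * (x ⬝ᵥ x) := by
  have h := hR (x ∘ e)
  have e1 : (x ∘ e) ⬝ᵥ (x ∘ e) = x ⬝ᵥ x :=
    Equiv.sum_comp e.toEquiv (fun w => x w * x w)
  have e2 : (x ∘ e) ⬝ᵥ (G.adjMatrix ℝ *ᵥ (x ∘ e)) = x ⬝ᵥ (H.adjMatrix ℝ *ᵥ x) := by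
    simp only [dotProduct, Matrix.mulVec]
    rw [← Equiv.sum_comp e.toEquiv]
    apply Finset.sum_congr rfl; intro i _
    rw [← Equiv.sum_comp e.toEquiv (fun j => H.adjMatrix ℝ (e.toEquiv i) j * x j)]
    show _ = x (e i) * _
    congr 1
    apply Finset.sum_congr rfl; intro j _
    simp only [SimpleGraph.adjMatrix_apply]
    congr 1
    have : H.Adj (e i) (e j) ↔ G.Adj i j := e.map_rel_iff
    show _ = if H.Adj (e i) (e j) then (1 : ℝ) else 0
    simp only [this]
  rw [← e1, ← e2]; exact h

lemma quad_split {V : Type*} [Fintype V] [DecidableEq V] (G : SimpleGraph V) [DecidableRel G.Adj]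
    (f : V → ℝ) (X : Finset V) : f ⬝ᵥ (G.adjMatrix ℝ *ᵥ f) =
      ∑ a ∈ X, f a * ∑ b ∈ G.neighborFinset a, f b +
      ∑ a ∈ Xᶜ, f a * ∑ b ∈ (G.neighborFinset a).filter (· ∉ X), f b +
      ∑ a ∈ X, f a * ∑ b ∈ (G.neighborFinset a).filter (· ∉ X), f b := by
  have h1 : f ⬝ᵥ (G.adjMatrix ℝ *ᵥ f) = ∑ a, f a * ∑ b ∈ G.neighborFinset a, f b := by
    simp only [dotProduct, SimpleGraph.adjMatrix_mulVec_apply]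
  rw [h1, ← Finset.sum_add_sum_compl X, add_assoc]
  congr 1
  have h2 : ∀ a, ∑ b ∈ G.neighborFinset a, f b =
      ∑ b ∈ (G.neighborFinset a).filter (· ∉ X), f b +
      ∑ b ∈ (G.neighborFinset a).filter (· ∈ X), f b := by
    intro a
    rw [add_comm]
    exact (Finset.sum_filter_add_sum_filter_not _ (· ∈ X) _).symm
  simp_rw [h2, mul_add]
  rw [Finset.sum_add_distrib]
  congr 1
  simp_rw [Finset.mul_sum]
  rw [Finset.sum_comm' (t' := X) (s' := fun b => (G.neighborFinset b).filter (· ∉ X))]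
  · apply Finset.sum_congr rfl; intro a _
    apply Finset.sum_congr rfl; intro b _
    ring
  · intro a b
    simp only [Finset.mem_compl, Finset.mem_filter, SimpleGraph.mem_neighborFinset, G.adj_comm a b]
    tauto

lemma struct_lemma (t n : ℕ) (ht : 1 ≤ t) (hn : 6 * t + 10 ≤ n)
    (G : SimpleGraph (Fin n)) [DecidableRel G.Adj] (X : Finset (Fin n)) (hX : #X = t + 1)
    (hXd : ∀ x ∈ X, G.degree x ≤ t)
    (hl : adjSpecRad (Bgraph n 1 t) ≤ adjSpecRad G) :
    Nonempty (G ≃g Bgraph n 1 t) := by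
  classical
  have : Nonempty (Fin n) := ⟨⟨0, by omega⟩⟩
  obtain ⟨f, hf0, hfne, hfe, -⟩ := spec_exists G
  obtain ⟨-, -, -, -, hRB⟩ := spec_exists (Bgraph n 1 t)
  have hlB := lamB n t ht hn
  set lam := adjSpecRad G with hlam
  have hnR : (6 * t + 10 : ℝ) ≤ n := by exact_mod_cast hn
  have htR : (1 : ℝ) ≤ t := by exact_mod_cast ht
  have hlg : (n : ℝ) - t - 2 < lam := lt_of_lt_of_le hlB hl
  have hlpos : 0 < lam := by linarith
  have hev : ∀ v, ∑ w ∈ G.neighborFinset v, f w = lam * f v := by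
    intro v
    have := congrFun hfe v
    rwa [SimpleGraph.adjMatrix_mulVec_apply, Pi.smul_apply, smul_eq_mul] at this
  obtain ⟨Y, hYc, hYt⟩ := exists_top f t (by rw [Fintype.card_fin]; omega)
  have hd : Disjoint X Y := by
    rw [Finset.disjoint_left]
    intro y hyX hyY
    obtain ⟨w, -, hw⟩ := Finset.exists_max_image Finset.univ f Finset.univ_nonempty
    have hF : 0 < f w := by
      obtain ⟨v, hv⟩ := Function.ne_iff.1 hfne
      have := hw v (Finset.mem_univ v)
      exact lt_of_lt_of_le (lt_of_le_of_ne (hf0 v) (Ne.symm hv)) this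
    have hy1 : lam * f y ≤ t * f w := by
      rw [← hev y]
      have h1 : ∑ v ∈ G.neighborFinset y, f v ≤ #(G.neighborFinset y) • f w :=
        Finset.sum_le_card_nsmul _ _ _ fun v _ => hw v (Finset.mem_univ v)
      rw [SimpleGraph.card_neighborFinset_eq_degree, nsmul_eq_mul] at h1
      have h2 : (G.degree y : ℝ) ≤ t := by exact_mod_cast hXd y hyX
      nlinarith
    have hw1 : lam * f w ≤ (t - 1) * f w + (n - t + 1) * f y := by
      rw [← hev w]
      have h1 : ∑ v ∈ G.neighborFinset w, f v ≤ ∑ v, f v :=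
        Finset.sum_le_sum_of_subset_of_nonneg (Finset.subset_univ _) fun v _ _ => hf0 v
      rw [← Finset.sum_add_sum_compl (Y.erase y)] at h1
      have h2 : ∑ v ∈ Y.erase y, f v ≤ #(Y.erase y) • f w :=
        Finset.sum_le_card_nsmul _ _ _ fun v _ => hw v (Finset.mem_univ v)
      have h3 : ∑ v ∈ (Y.erase y)ᶜ, f v ≤ #((Y.erase y)ᶜ) • f y := by
        apply Finset.sum_le_card_nsmul
        intro v hv
        rw [Finset.mem_compl, Finset.mem_erase, not_and_or, not_not] at hv
        rcases hv with rfl | hv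
        · exact le_rfl
        · exact hYt y hyY v hv
      have c1 : #(Y.erase y) + 1 = t := by rw [Finset.card_erase_add_one hyY, hYc]
      have c2 := Finset.card_add_card_compl (Y.erase y)
      rw [Fintype.card_fin] at c2
      have c1R : (#(Y.erase y) : ℝ) = t - 1 := by rw [← c1]; push_cast; ring
      have c2R : (#((Y.erase y)ᶜ) : ℝ) = n - t + 1 := by
        have : (#(Y.erase y) : ℝ) + #((Y.erase y)ᶜ) = n := by exact_mod_cast c2
        linarith
      rw [nsmul_eq_mul, c1R] at h2
      rw [nsmul_eq_mul, c2R] at h3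
      linarith
    have h4 : lam * (lam * f w) ≤ lam * ((t - 1) * f w + (n - t + 1) * f y) :=
      mul_le_mul_of_nonneg_left hw1 hlpos.le
    have h5 : ((n : ℝ) - t + 1) * (lam * f y) ≤ (n - t + 1) * (t * f w) :=
      mul_le_mul_of_nonneg_left hy1 (by linarith)
    have h6 : (lam * (lam - t + 1) - (n - t + 1) * t) * f w ≤ 0 := by nlinarith
    have h7 : 0 < lam * (lam - t + 1) - (n - t + 1) * t := by
      have : ((n : ℝ) - t - 2) * (4 * t + 9) < lam * (lam - t + 1) := by
        apply mul_lt_mul'' hlg <;> linarith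
      nlinarith
    have := mul_pos h7 hF
    linarith
  obtain ⟨e⟩ := BXY_iso n t hn X Y hX hYc hd
  have hdd : ∀ a ∈ X, a ∉ Y := fun a ha hb => Finset.disjoint_left.1 hd ha hb
  have hRX := iso_ray _ _ e _ hRB
  set B := BXY X Y with hB
  have nbX : ∀ x ∈ X, B.neighborFinset x = Y := by
    intro x hx
    ext b
    rw [SimpleGraph.mem_neighborFinset, hB, BXY_adj]
    have := hdd x hx
    constructor
    · tauto
    · intro h
      exact ⟨fun hxb => this (hxb ▸ h), Or.inr (Or.inl h)⟩
  have nbY : ∀ y ∈ Y, B.neighborFinset y = Finset.univ.erase y := by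
    intro y hy
    ext b
    rw [SimpleGraph.mem_neighborFinset, hB, BXY_adj]
    simp [hy, eq_comm]
  have hsumX : ∀ x ∈ X, ∑ b ∈ G.neighborFinset x, f b ≤ ∑ b ∈ Y, f b := by
    intro x hx
    apply sum_le_top f hf0 Y _ hYt
    rw [SimpleGraph.card_neighborFinset_eq_degree, hYc]
    exact hXd x hx
  have hGB : f ⬝ᵥ (G.adjMatrix ℝ *ᵥ f) ≤ f ⬝ᵥ (B.adjMatrix ℝ *ᵥ f) := by
    rw [quad_split G f X, quad_split B f X]
    apply add_le_add
    · apply add_le_add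
      · apply Finset.sum_le_sum
        intro x hx
        apply mul_le_mul_of_nonneg_left _ (hf0 x)
        rw [nbX x hx]
        exact hsumX x hx
      · apply Finset.sum_le_sum
        intro a ha
        apply mul_le_mul_of_nonneg_left _ (hf0 a)
        apply Finset.sum_le_sum_of_subset_of_nonneg
        · intro b hb
          rw [Finset.mem_compl] at ha
          rw [Finset.mem_filter, SimpleGraph.mem_neighborFinset] at hb ⊢
          exact ⟨⟨hb.1.ne, Or.inr (Or.inr ⟨ha, hb.2⟩)⟩, hb.2⟩
        · intro v _ _; exact hf0 v
    · apply Finset.sum_le_sum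
      intro x hx
      apply mul_le_mul_of_nonneg_left _ (hf0 x)
      rw [nbX x hx, Finset.filter_true_of_mem (s := Y) (p := fun b => b ∉ X)
        (fun y hy hyX => hdd y hyX hy)]
      refine le_trans ?_ (hsumX x hx)
      exact Finset.sum_le_sum_of_subset_of_nonneg (Finset.filter_subset _ _) fun v _ _ => hf0 v
  have hff : 0 ≤ f ⬝ᵥ f := Finset.sum_nonneg fun i _ => mul_self_nonneg (f i)
  have hGe : f ⬝ᵥ (G.adjMatrix ℝ *ᵥ f) = lam * (f ⬝ᵥ f) := by
    rw [hfe, dotProduct_smul, smul_eq_mul]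
  have hRX' : ∀ x : Fin n → ℝ, x ⬝ᵥ (B.adjMatrix ℝ *ᵥ x) ≤ lam * (x ⬝ᵥ x) := by
    intro x
    have hxx : 0 ≤ x ⬝ᵥ x := Finset.sum_nonneg fun i _ => mul_self_nonneg (x i)
    exact (hRX x).trans (mul_le_mul_of_nonneg_right hl hxx)
  have hBe := ray_eq_aux _ (adj_isHermitian B) lam hRX' f
    (le_antisymm (hRX' f) (hGe ▸ hGB))
  have hevB : ∀ v, ∑ w ∈ B.neighborFinset v, f w = lam * f v := by
    intro v
    have := congrFun hBe v
    rwa [SimpleGraph.adjMatrix_mulVec_apply, Pi.smul_apply, smul_eq_mul] at this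
  obtain ⟨y, hy⟩ : Y.Nonempty := by rw [← Finset.card_pos]; omega
  have hfy : 0 < f y := by
    rcases (hf0 y).lt_or_eq with h | h
    · exact h
    exfalso
    have h1 := hevB y
    rw [nbY y hy, ← h, mul_zero, Finset.sum_eq_zero_iff_of_nonneg (fun i _ => hf0 i)] at h1
    apply hfne
    ext v
    by_cases hv : v = y
    · rw [hv]; exact h.symm
    · exact h1 v (by simp [hv])
  have hpos : ∀ v, 0 < f v := by
    intro v
    by_cases hv : v = y
    · rw [hv]; exact hfy
    have h1 : f y ≤ ∑ w ∈ B.neighborFinset v, f w := by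
      apply Finset.single_le_sum (fun i _ => hf0 i)
      rw [SimpleGraph.mem_neighborFinset]
      exact ⟨hv, Or.inr (Or.inl hy)⟩
    rw [hevB v] at h1
    by_contra hcon
    nlinarith [hf0 v]
  have gY : ∀ y ∈ Y, G.neighborFinset y = B.neighborFinset y := by
    intro y hy
    apply eq_of_sum_eq f hpos
    · rw [nbY y hy]
      intro b hb
      rw [SimpleGraph.mem_neighborFinset] at hb
      simp [hb.ne']
    · rw [hev, hevB]
  have gX : ∀ x ∈ X, G.neighborFinset x = B.neighborFinset x := by
    intro x hx
    rw [nbX x hx]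
    symm
    apply Finset.eq_of_subset_of_card_le
    · intro y hy
      have : x ∈ G.neighborFinset y := by
        rw [gY y hy, nbY y hy]
        have : x ≠ y := fun h => hdd x hx (h ▸ hy)
        simp [this]
      rw [SimpleGraph.mem_neighborFinset] at this ⊢
      exact this.symm
    · rw [SimpleGraph.card_neighborFinset_eq_degree, hYc]
      exact hXd x hx
  have gall : ∀ a, G.neighborFinset a = B.neighborFinset a := by
    intro a
    by_cases haX : a ∈ X
    · exact gX a haX
    by_cases haY : a ∈ Y
    · exact gY a haY
    apply eq_of_sum_eq f hpos
    · intro b hb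
      rw [SimpleGraph.mem_neighborFinset] at hb ⊢
      refine ⟨hb.ne, Or.inr (Or.inr ⟨haX, fun hbX => haY ?_⟩)⟩
      rw [← nbX b hbX, ← gX b hbX, SimpleGraph.mem_neighborFinset]
      exact hb.symm
    · rw [hev, hevB]
  have hGB' : G = B := by
    ext a b
    rw [← SimpleGraph.mem_neighborFinset, ← SimpleGraph.mem_neighborFinset, gall]
  exact ⟨(hGB' ▸ e.symm : G ≃g Bgraph n 1 t)⟩

/-- **Theorem 1.1** (Li–Ning): spectral radius condition for traceability with minimum
degree at least `t`.  Note that `K_t ∨ (K_{n-2t-1} ∪ (t+1)K₁) = B(n,1,t)`. -/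
theorem specRad_traceable_LiNing (t n : ℕ) (ht : 1 ≤ t)
    (hn : max (6 * t + 10) ((t ^ 2 + 7 * t + 8) / 2) ≤ n)
    (G : SimpleGraph (Fin n)) [DecidableRel G.Adj]
    (hmin : ∀ v, t ≤ G.degree v)
    (hl : adjSpecRad (Bgraph n 1 t) ≤ adjSpecRad G) :
    Traceable G ∨ Nonempty (G ≃g Bgraph n 1 t) := by
  have hn1 : 6 * t + 10 ≤ n := le_trans (le_max_left _ _) hn
  have hn2 : (t ^ 2 + 7 * t + 8) / 2 ≤ n := le_trans (le_max_right _ _) hn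
  have hn3 : t ^ 2 + 7 * t + 8 ≤ 2 * n := by
    have : (t ^ 2 + 7 * t) % 2 = 0 := by
      have h : t ^ 2 + 7 * t = t * (t + 1) + 2 * (3 * t) := by ring
      rw [h, Nat.add_mul_mod_self_left]
      exact Nat.even_iff.1 (Nat.even_mul_succ_self t)
    omega
  by_cases hT : Traceable G
  · exact Or.inl hT
  right
  have : Nonempty (Fin n) := ⟨⟨0, by omega⟩⟩
  obtain ⟨h, h0, h1, h2⟩ := chvatal G hT
  have hth : t ≤ h := by
    have : 0 < #{w : Fin n | G.degree w ≤ h} := by omega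
    obtain ⟨w, hw⟩ := Finset.card_pos.1 this
    simp only [Finset.mem_filter, Finset.mem_univ, true_and] at hw
    exact (hmin w).trans hw
  rcases hth.eq_or_lt with rfl | hlt
  · obtain ⟨X, hXs, hXc⟩ := Finset.exists_subset_card_eq h1
    refine struct_lemma t n ht hn1 G X hXc ?_ hl
    intro x hx
    have := hXs hx
    simpa using this
  · exfalso
    obtain ⟨f, hf0, hfne, hfe, -⟩ := spec_exists G
    have e1 := edge_bound G t hmin f hf0 hfne _ hfe
    have e2 := deg_sum_bound G h h0 h1 h2
    rw [Fintype.card_fin] at e1 e2 h0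
    refine numerics t h n (adjSpecRad G) _ ?_ ?_ ?_ ?_ ?_ ?_ e1 e2
    · exact_mod_cast ht
    · exact_mod_cast hn1
    · exact_mod_cast hn3
    · exact_mod_cast hlt
    · exact_mod_cast h0
    · exact lt_of_lt_of_le (lamB n t ht hn1) hl
end

section
/- Let k ≥ 1 and δ ≥ 2 be integers. Let G be a connected simple graph on n ≥ max{δ²(δ+k) + δ + k + 5, 5k + 6δ + 6} vertices with minimum degree δ(G) ≥ δ. If the adjacency spectral radius satisfies λ(G) ≥ n − δ − k − 1, then G is k-path-coverable, unless G = B(n,k,δ). -/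
open Finset Matrix

section PathLists
open Classical

variable {V : Type*}

/-- Number of consecutive non-adjacent pairs in a list of vertices. -/
noncomputable def br (G : SimpleGraph V) : List V → ℕ
  | [] => 0
  | [_] => 0
  | a :: b :: l => (if G.Adj a b then 0 else 1) + br G (b :: l)

/-- List form of path-coverability. -/
def Cov (G : SimpleGraph V) (k : ℕ) : Prop :=
  ∃ l : List V, l.Nodup ∧ (∀ v, v ∈ l) ∧ br G l + 1 ≤ k

lemma br_append (G : SimpleGraph V) (P Q : List V) (p q : V)
    (hp : P.getLast? = some p) (hq : Q.head? = some q) :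
    br G (P ++ Q) = br G P + (if G.Adj p q then 0 else 1) + br G Q := by
  induction P with
  | nil => simp at hp
  | cons a P ih =>
    cases P with
    | nil =>
      simp at hp
      subst hp
      cases Q with
      | nil => simp at hq
      | cons b Q =>
        simp at hq
        subst hq
        simp [br]
    | cons b P =>
      have := ih (by simpa using hp)
      simp only [List.cons_append, br] at this ⊢
      omega

lemma br_cons_le (G : SimpleGraph V) (a : V) (Q : List V) : br G (a :: Q) ≤ Q.length := by
  induction Q generalizing a with
  | nil => simp [br]
  | cons b Q ih =>
    have := ih b
    simp only [br, List.length_cons] at this ⊢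
    split_ifs <;> omega

lemma br_append_le_length (G : SimpleGraph V) (P Q : List V) :
    br G (P ++ Q) ≤ br G P + Q.length := by
  induction P with
  | nil =>
    cases Q with
    | nil => simp
    | cons a Q =>
      have := br_cons_le G a Q
      simp only [List.nil_append, List.length_cons]
      omega
  | cons a P ih =>
    cases P with
    | nil =>
      have := br_cons_le G a Q
      simp only [List.cons_append, List.nil_append]
      omega
    | cons b P =>
      simp only [List.cons_append, br] at ih ⊢
      omega

lemma br_append_le (G : SimpleGraph V) (P Q : List V) :
    br G (P ++ Q) ≤ br G P + 1 + br G Q := by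
  cases hp : P.getLast? with
  | none => 
    have : P = [] := by simpa using hp
    subst this; simp
  | some p =>
    cases hq : Q.head? with
    | none => 
      have : Q = [] := by simpa using hq
      subst this; simp [br]
    | some q =>
      rw [br_append G P Q p q hp hq]
      split_ifs <;> omega

lemma br_reverse (G : SimpleGraph V) (P : List V) : br G P.reverse = br G P := by
  induction P with
  | nil => rfl
  | cons a P ih =>
    cases P with
    | nil => rfl
    | cons b P =>
      rw [List.reverse_cons, br_append G _ _ b a (by simp) (by simp), ih]
      simp only [br, G.adj_comm b a]
      omega

lemma exists_break (G : SimpleGraph V) (l : List V) (h : 0 < br G l) :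
    ∃ A a b B, l = A ++ a :: b :: B ∧ ¬ G.Adj a b := by
  induction l with
  | nil => simp [br] at h
  | cons a P ih =>
    cases P with
    | nil => simp [br] at h
    | cons b P =>
      by_cases hab : G.Adj a b
      · simp only [br, hab, if_true, zero_add] at h
        obtain ⟨A, x, y, B, h1, h2⟩ := ih h
        exact ⟨a :: A, x, y, B, by rw [h1]; rfl, h2⟩
      · exact ⟨[], a, b, P, rfl, hab⟩

lemma br_split (G : SimpleGraph V) (A B : List V) (a b : V) :
    br G (A ++ a :: b :: B) =
      br G (A ++ [a]) + (if G.Adj a b then 0 else 1) + br G (b :: B) := by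
  rw [← br_append G _ _ a b (by simp) (by simp)]
  simp

lemma br_congr (G G' : SimpleGraph V) (l : List V)
    (h : ∀ a ∈ l, ∀ b ∈ l, (G.Adj a b ↔ G'.Adj a b)) : br G l = br G' l := by
  induction l with
  | nil => rfl
  | cons a P ih =>
    cases P with
    | nil => rfl
    | cons b P =>
      simp only [br]
      rw [ih (fun a ha b hb => h a (by simp [ha]) b (by simp [hb]))]
      simp [h a (by simp) b (by simp)]

lemma count_aux_s3 (G : SimpleGraph V) (x y : V) (l : List V) (hl : l ≠ [])
    (h : ∀ A a b B, l = A ++ a :: b :: B →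
      (if G.Adj x a then 1 else 0) + (if G.Adj y b then 1 else 0)
        + (if G.Adj a b then 0 else 1) ≤ 1) :
    l.dropLast.countP (fun a => decide (G.Adj x a)) +
      l.tail.countP (fun b => decide (G.Adj y b)) + br G l + 1 ≤ l.length := by
  induction l with
  | nil => simp at hl
  | cons a P ih =>
    cases P with
    | nil => simp [br]
    | cons b P =>
      have h1 := ih (by simp) (fun A c d B hh => h (a :: A) c d B (by rw [hh]; rfl))
      have h2 := h [] a b P rfl
      simp only [List.dropLast_cons_cons, List.tail_cons, List.countP_cons, br,
        List.length_cons, decide_eq_true_eq] at h1 h2 ⊢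
      omega

lemma ore_core_s3 [Fintype V] (G : SimpleGraph V) (k : ℕ) (hk : 1 ≤ k)
    (hcov : ¬ Cov G k) (x y : V) (hxy : ¬ G.Adj x y) (c : List V) (hnd : c.Nodup)
    (hall : ∀ v, v ∈ c)
    (hy : c.head? = some y) (hx : c.getLast? = some x) (hbr : br G c ≤ k) :
    G.degree x + G.degree y + k + 1 ≤ Fintype.card V := by
  have hcov' : ∀ l : List V, l.Perm c → k ≤ br G l := by
    intro l hl
    by_contra hlt
    exact hcov ⟨l, hl.nodup_iff.mpr hnd, fun v => hl.mem_iff.mpr (hall v), by omega⟩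
  have hbk : br G c = k := le_antisymm hbr (hcov' c (List.Perm.refl _))
  have hsplit : ∀ A a b B, c = A ++ a :: b :: B →
      (if G.Adj x a then 1 else 0) + (if G.Adj y b then 1 else 0)
        + (if G.Adj a b then 0 else 1) ≤ 1 := by
    intro A a b B hc
    have hc' : c = (A ++ [a]) ++ (b :: B) := by rw [hc]; simp
    have hbs := br_split G A B a b
    rw [← hc, hbk] at hbs
    have hlast : (b :: B).getLast? = some x := by
      rw [hc'] at hx
      rw [List.getLast?_append] at hx
      cases h : (b :: B).getLast? with
      | none => simp at h
      | some z => rw [h] at hx; simpa using hx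
    have hhead : (A ++ [a]).head? = some y := by
      rw [hc'] at hy
      cases A <;> simpa using hy
    have e1 : br G ((A ++ [a]) ++ (b :: B).reverse) =
        br G (A ++ [a]) + (if G.Adj a x then 0 else 1) + br G (b :: B) := by
      rw [br_append G _ _ a x (by simp) (by rw [List.head?_reverse, hlast]), br_reverse]
    have e2 : br G ((A ++ [a]).reverse ++ (b :: B)) =
        br G (A ++ [a]) + (if G.Adj y b then 0 else 1) + br G (b :: B) := by
      rw [br_append G _ _ y b (by rw [List.getLast?_reverse, hhead]) (by simp), br_reverse]
    have p1 : ((A ++ [a]) ++ (b :: B).reverse).Perm c := by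
      rw [hc']
      exact List.Perm.append_left _ (List.reverse_perm _)
    have p2 : ((A ++ [a]).reverse ++ (b :: B)).Perm c := by
      rw [hc']
      exact List.Perm.append_right _ (List.reverse_perm _)
    have f1 := hcov' _ p1
    have f2 := hcov' _ p2
    rw [e1] at f1
    rw [e2] at f2
    rw [G.adj_comm a x] at f1
    by_cases hab : G.Adj a b
    · by_cases hxa : G.Adj x a
      · by_cases hyb : G.Adj y b
        · exfalso
          simp only [hab, hxa, hyb, if_true] at hbs f1 f2 e2
          obtain ⟨P, s, t, Q, hP, hst⟩ := exists_break G ((A ++ [a]).reverse ++ (b :: B))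
            (by omega)
          have g1 := br_split G P Q s t
          rw [← hP, e2] at g1
          have hP' : (A ++ [a]).reverse ++ (b :: B) = (P ++ [s]) ++ (t :: Q) := by
            rw [hP]; simp
          have l1 : (t :: Q).getLast? = some x := by
            have : ((A ++ [a]).reverse ++ (b :: B)).getLast? = some x := by
              rw [List.getLast?_append, hlast]; simp
            rw [hP', List.getLast?_append] at this
            cases h : (t :: Q).getLast? with
            | none => simp at h
            | some z => rw [h] at this; simpa using this
          have l2 : (P ++ [s]).head? = some a := by
            have : ((A ++ [a]).reverse ++ (b :: B)).head? = some a := by simp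
            rw [hP'] at this
            cases P <;> simpa using this
          have g2 := br_append G (t :: Q) (P ++ [s]) x a l1 l2
          have p3 : ((t :: Q) ++ (P ++ [s])).Perm c := by
            refine List.Perm.trans ?_ p2
            rw [hP']
            exact List.perm_append_comm
          have f3 := hcov' _ p3
          simp only [hst, hxa, if_true, if_false] at g1 g2
          omega
        · simp [hab, hyb]; split_ifs <;> simp
      · simp [hab, hxa]; split_ifs <;> simp
    · simp only [hab, if_false] at *
      split_ifs at * <;> omega
  have hne : c ≠ [] := by rintro rfl; simp at hy
  have hc := count_aux_s3 G x y c hne hsplit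
  have htf : c.toFinset = Finset.univ := by ext v; simp [hall v]
  have hlen : c.length = Fintype.card V := by
    rw [← List.toFinset_card_of_nodup hnd, htf, Finset.card_univ]
  have hdeg : ∀ v, G.degree v = c.countP (fun a => decide (G.Adj v a)) := by
    intro v
    rw [List.countP_eq_length_filter, ← List.toFinset_card_of_nodup (hnd.filter _),
      ← G.card_neighborFinset_eq_degree]
    congr 1
    ext w
    simp [hall w]
  have d1 : c.countP (fun a => decide (G.Adj x a)) =
      c.dropLast.countP (fun a => decide (G.Adj x a)) := by
    have : c = c.dropLast ++ [x] := by
      rw [List.dropLast_append_getLast? x hx]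
    conv_lhs => rw [this]
    simp
  have d2 : c.countP (fun a => decide (G.Adj y a)) =
      c.tail.countP (fun a => decide (G.Adj y a)) := by
    cases c with
    | nil => simp at hne
    | cons z c => 
      simp at hy
      subst hy
      simp
  rw [hdeg x, hdeg y, d1, d2]
  omega

lemma br_edge (G : SimpleGraph V) (u v : V) (l : List V) :
    br G l ≤ br (G ⊔ SimpleGraph.edge u v) l ∨
    ∃ A a b B, l = A ++ a :: b :: B ∧ ((a = u ∧ b = v) ∨ (a = v ∧ b = u)) := by
  induction l with
  | nil => left; simp [br]
  | cons a P ih =>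
    cases P with
    | nil => left; simp [br]
    | cons b P =>
      by_cases hab : (a = u ∧ b = v) ∨ (a = v ∧ b = u)
      · right
        exact ⟨[], a, b, P, rfl, hab⟩
      · rcases ih with ih | ⟨A, x, y, B, h1, h2⟩
        · left
          have : (G ⊔ SimpleGraph.edge u v).Adj a b ↔ G.Adj a b := by
            simp only [SimpleGraph.sup_adj, SimpleGraph.edge_adj]
            tauto
          simp only [br, this]
          omega
        · right
          exact ⟨a :: A, x, y, B, by rw [h1]; rfl, h2⟩

lemma ore [Fintype V] (G : SimpleGraph V) (k : ℕ) (hk : 1 ≤ k)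
    (hcov : ¬ Cov G k) (u v : V) (huv : ¬ G.Adj u v)
    (hcov' : Cov (G ⊔ SimpleGraph.edge u v) k) :
    G.degree u + G.degree v + k + 1 ≤ Fintype.card V := by
  obtain ⟨l, hnd, hall, hbr⟩ := hcov'
  have h1 : k ≤ br G l := by
    by_contra h
    exact hcov ⟨l, hnd, hall, by omega⟩
  rcases br_edge G u v l with h | ⟨A, a, b, B, hl, hab⟩
  · omega
  have hl' : l = (A ++ [a]) ++ (b :: B) := by rw [hl]; simp
  have hdisj := hnd
  rw [hl', List.nodup_append] at hdisj
  obtain ⟨-, -, hd⟩ := hdisj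
  have hbs := br_split (G ⊔ SimpleGraph.edge u v) A B a b
  rw [← hl] at hbs
  have hnadj : ∀ z w, (z ≠ w) → ¬ (z = a ∧ w = b) → ¬ (z = b ∧ w = a) →
      (G.Adj z w ↔ (G ⊔ SimpleGraph.edge u v).Adj z w) := by
    intro z w hzw h1 h2
    simp only [SimpleGraph.sup_adj, SimpleGraph.edge_adj]
    rcases hab with ⟨rfl, rfl⟩ | ⟨rfl, rfl⟩ <;> tauto
  have k1 : br G (A ++ [a]) = br (G ⊔ SimpleGraph.edge u v) (A ++ [a]) := by
    apply br_congr
    intro z hz w hw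
    by_cases hzw : z = w
    · subst hzw; simp
    · apply hnadj z w hzw
      · rintro ⟨-, rfl⟩; exact hd _ hw _ (by simp) rfl
      · rintro ⟨rfl, -⟩; exact hd _ hz _ (by simp) rfl
  have k2 : br G (b :: B) = br (G ⊔ SimpleGraph.edge u v) (b :: B) := by
    apply br_congr
    intro z hz w hw
    by_cases hzw : z = w
    · subst hzw; simp
    · apply hnadj z w hzw
      · rintro ⟨rfl, -⟩; exact hd _ (by simp) _ hz rfl
      · rintro ⟨-, rfl⟩; exact hd _ (by simp) _ hw rfl
  have k3 := br_append_le G (b :: B) (A ++ [a])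
  have hp : ((b :: B) ++ (A ++ [a])).Perm l := by
    rw [hl']; exact List.perm_append_comm
  have hab' : ¬ G.Adj a b := by
    rcases hab with ⟨rfl, rfl⟩ | ⟨rfl, rfl⟩
    · exact huv
    · rwa [G.adj_comm]
  have := ore_core_s3 G k hk hcov a b hab' ((b :: B) ++ (A ++ [a]))
    (hp.nodup_iff.mpr hnd) (fun w => hp.mem_iff.mpr (hall w)) (by simp)
    (by rw [← List.append_assoc, List.getLast?_append]; simp) (by omega)
  rcases hab with ⟨rfl, rfl⟩ | ⟨rfl, rfl⟩ <;> omega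

lemma walks_of_list (G : SimpleGraph V) (a : V) (l : List V) :
    ∃ (L : List (Σ (u : V) (v : V), G.Walk u v)),
      L.length = br G (a :: l) + 1 ∧
      L.flatMap (fun P => P.2.2.support) = a :: l ∧ (L.head?.map (fun P => P.1)) = some a := by
  induction l generalizing a with
  | nil => exact ⟨[⟨a, a, SimpleGraph.Walk.nil⟩], by simp [br]⟩
  | cons b l ih =>
    obtain ⟨L, h1, h2, h3⟩ := ih b
    by_cases hab : G.Adj a b
    · cases L with
      | nil => simp at h1
      | cons P L =>
        obtain ⟨u, v, p⟩ := P
        simp at h3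
        subst h3
        refine ⟨⟨a, v, SimpleGraph.Walk.cons hab p⟩ :: L, ?_, ?_, ?_⟩
        · simp [br, hab] at h1 ⊢; omega
        · simp at h2 ⊢; exact h2
        · simp
    · refine ⟨⟨a, a, SimpleGraph.Walk.nil⟩ :: L, ?_, ?_, ?_⟩
      · simp [br, hab] at h1 ⊢; omega
      · simp [h2]
      · simp

lemma pathCoverable_of_cov (G : SimpleGraph V) (k : ℕ) (h : Cov G k) :
    PathCoverable G k := by
  obtain ⟨l, hnd, hall, hbr⟩ := h
  cases l with
  | nil =>
    refine ⟨0, fun i => i.elim0, by omega, fun i => i.elim0, fun v => ?_, fun i => i.elim0⟩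
    simpa using hall v
  | cons a l =>
    obtain ⟨L, h1, h2, -⟩ := walks_of_list G a l
    rw [← h2] at hnd hall
    rw [List.nodup_flatMap] at hnd
    refine ⟨L.length, fun i => L.get i, by omega, ?_, ?_, ?_⟩
    · intro i
      exact SimpleGraph.Walk.IsPath.mk' (hnd.1 _ (List.get_mem L i))
    · intro v
      have := hall v
      rw [List.mem_flatMap] at this
      obtain ⟨P, hP, hv⟩ := this
      obtain ⟨i, rfl⟩ := List.mem_iff_get.mp hP
      exact ⟨i, hv⟩
    · intro i j hij v hi hj
      have hp := List.pairwise_iff_get.mp hnd.2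
      rcases lt_or_gt_of_ne hij with h | h
      · exact (hp i j h) hi hj
      · exact (hp j i h) hj hi

end PathLists

section Build
open Classical

variable {V : Type*}

lemma br_clique (G : SimpleGraph V) (l : List V) (hnd : l.Nodup)
    (h : ∀ a ∈ l, ∀ b ∈ l, a ≠ b → G.Adj a b) : br G l = 0 := by
  induction l with
  | nil => rfl
  | cons a P ih =>
    cases P with
    | nil => rfl
    | cons b P =>
      have h1 := ih hnd.of_cons (fun x hx y hy => h x (by simp [hx]) y (by simp [hy]))
      have h2 : G.Adj a b := h a (by simp) b (by simp) (by
        rintro rfl; simp at hnd)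
      simp [br, h1, h2]

lemma insert_dom (G : SimpleGraph V) (D l : List V) (hnd : (D ++ l).Nodup)
    (hD : ∀ d ∈ D, ∀ w, w ≠ d → G.Adj d w) :
    ∃ l' : List V, l'.Perm (D ++ l) ∧ br G l' ≤ br G l - D.length := by
  induction D with
  | nil => exact ⟨l, by simp, by simp⟩
  | cons d D ih =>
    obtain ⟨l', hp, hb⟩ := ih (by simpa using hnd.of_cons) (fun x hx => hD x (by simp [hx]))
    have hdn : d ∉ l' := by
      intro hd
      have := hp.mem_iff.mp hd
      rw [List.cons_append, List.nodup_cons] at hnd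
      exact hnd.1 this
    have had : ∀ w ∈ l', G.Adj d w := fun w hw => hD d (by simp) w (by
      rintro rfl; exact hdn hw)
    by_cases h0 : br G l' = 0
    · refine ⟨d :: l', by simpa using hp, ?_⟩
      cases l' with
      | nil => simp [br]
      | cons w l' =>
        have := had w (by simp)
        simp [br, this, h0]
    · obtain ⟨A, a, b, B, hl, hab⟩ := exists_break G l' (by omega)
      refine ⟨A ++ a :: d :: b :: B, ?_, ?_⟩
      · have : (A ++ a :: d :: b :: B).Perm (d :: (A ++ a :: b :: B)) := by
          have := List.perm_middle (a := d) (l₁ := A ++ [a]) (l₂ := b :: B)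
          simpa using this
        refine this.trans ?_
        rw [← hl]
        simpa using hp
      · have e1 := br_split G A B a b
        have e2 := br_split G A (b :: B) a d
        have e3 : G.Adj a d := (had a (by rw [hl]; simp)).symm
        have e4 : G.Adj d b := had b (by rw [hl]; simp)
        rw [← hl] at e1
        simp only [br, hab, e3, e4, if_true, if_false] at e1 e2
        rw [e2]
        simp only [List.length_cons]
        omega

lemma extend_list (G : SimpleGraph V) (L : Finset V) (r : ℕ) (p : List V) (hnd : p.Nodup)
    (hp : ∀ v ∈ p, v ∈ L) (hb : br G p + r + 2 ≤ p.length) :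
    ∃ l : List V, l.Nodup ∧ (∀ v, v ∈ l ↔ v ∈ L) ∧ br G l + r + 2 ≤ L.card := by
  have hsub : p.toFinset ⊆ L := fun v hv => hp v (by simpa using hv)
  refine ⟨p ++ (L \ p.toFinset).toList, ?_, ?_, ?_⟩
  · rw [List.nodup_append]
    refine ⟨hnd, Finset.nodup_toList _, ?_⟩
    rintro a ha b hb rfl
    simp at hb
    exact hb.2 ha
  · intro v
    simp
    constructor
    · rintro (h | h)
      · exact hp v h
      · exact h.1
    · intro h
      by_cases hv : v ∈ p <;> simp [hv, h]
  · have h1 := br_append_le_length G p (L \ p.toFinset).toList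
    have h2 := Finset.card_sdiff_add_card_eq_card hsub
    rw [List.toFinset_card_of_nodup hnd] at h2
    rw [Finset.length_toList] at h1
    omega

lemma exists_longest (G : SimpleGraph V) (L : Finset V) (hL : L.Nonempty) :
    ∃ p : List V, p ≠ [] ∧ p.Nodup ∧ (∀ v ∈ p, v ∈ L) ∧ br G p = 0 ∧
      ∀ q : List V, q.Nodup → (∀ v ∈ q, v ∈ L) → br G q = 0 → q.length ≤ p.length := by
  let P : ℕ → Prop := fun m => ∃ p : List V, p.length = m ∧ p.Nodup ∧ (∀ v ∈ p, v ∈ L) ∧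
    br G p = 0
  have hbd : ∀ q : List V, q.Nodup → (∀ v ∈ q, v ∈ L) → q.length ≤ L.card := by
    intro q h1 h2
    rw [← List.toFinset_card_of_nodup h1]
    exact Finset.card_le_card (fun v hv => h2 v (by simpa using hv))
  obtain ⟨x, hx⟩ := hL
  have P1 : P 1 := ⟨[x], by simp [br, hx]⟩
  have hc : 1 ≤ L.card := Finset.card_pos.mpr ⟨x, hx⟩
  obtain ⟨p, h1, h2, h3, h4⟩ := Nat.findGreatest_spec (P := P) hc P1
  have hge := Nat.le_findGreatest (P := P) hc P1
  refine ⟨p, ?_, h2, h3, h4, ?_⟩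
  · rintro rfl
    simp at h1
    omega
  · intro q q1 q2 q3
    rw [h1]
    exact Nat.le_findGreatest (hbd q q1 q2) ⟨q, rfl, q1, q2, q3⟩

lemma linear_forest (G : SimpleGraph V) (L : Finset V) (r : ℕ) (hr : 1 ≤ r)
    (hL : r + 2 ≤ L.card) (hdeg : ∀ w ∈ L, r ≤ (L.filter (fun x => G.Adj w x)).card) :
    ∃ l : List V, l.Nodup ∧ (∀ v, v ∈ l ↔ v ∈ L) ∧ br G l + r + 2 ≤ L.card := by
  obtain ⟨p, hne, hnd, hp, hb, hmax⟩ := exists_longest G L (Finset.card_pos.mp (by omega))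
  obtain ⟨a, p', rfl⟩ : ∃ a p', p = a :: p' := by
    cases p with
    | nil => simp at hne
    | cons a p' => exact ⟨a, p', rfl⟩
  have haL : a ∈ L := hp a (by simp)
  have hsub : L.filter (fun x => G.Adj a x) ⊆ p'.toFinset := by
    intro w hw
    rw [Finset.mem_filter] at hw
    by_contra hwp
    have hwa : w ≠ a := fun h => G.loopless.irrefl a (h ▸ hw.2)
    have := hmax (w :: a :: p') (by
      rw [List.nodup_cons]
      refine ⟨?_, hnd⟩
      simp at hwp ⊢
      exact ⟨hwa, hwp⟩) (by
      intro v hv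
      rw [List.mem_cons] at hv
      rcases hv with rfl | hv
      · exact hw.1
      · exact hp v hv) (by simp [br, hw.2.symm, hb])
    simp at this
  have hnd' : p'.Nodup := hnd.of_cons
  have hap : a ∉ p' := (List.nodup_cons.mp hnd).1
  have hcard := Finset.card_le_card hsub
  rw [List.toFinset_card_of_nodup hnd'] at hcard
  have hda := hdeg a haL
  by_cases hlen : r + 1 ≤ p'.length
  · exact extend_list G L r (a :: p') hnd hp (by simp [hb]; omega)
  have hlr : p'.length = r := by omega
  have heq : L.filter (fun x => G.Adj a x) = p'.toFinset := by
    apply Finset.eq_of_subset_of_card_le hsub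
    rw [List.toFinset_card_of_nodup hnd']
    omega
  have hadj : ∀ x ∈ p', G.Adj a x := by
    intro x hx
    have : x ∈ L.filter (fun x => G.Adj a x) := by rw [heq]; simpa using hx
    exact (Finset.mem_filter.mp this).2
  obtain ⟨w, hwL, hwp⟩ : ∃ w ∈ L, w ∉ (a :: p').toFinset := by
    apply Finset.exists_mem_notMem_of_card_lt_card
    rw [List.toFinset_card_of_nodup hnd]
    simp; omega
  have hwp : w ∉ a :: p' := by simpa using hwp
  obtain ⟨w', hw'⟩ : (L.filter (fun x => G.Adj w x)).Nonempty :=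
    Finset.card_pos.mp (by have := hdeg w hwL; omega)
  rw [Finset.mem_filter] at hw'
  obtain ⟨hw'L, hww'⟩ := hw'
  by_cases hin : w' ∈ a :: p'
  · exfalso
    rw [List.mem_cons] at hin
    rcases hin with rfl | hin
    · have := hmax (w :: w' :: p') (List.nodup_cons.mpr ⟨hwp, hnd⟩) (by
        intro v hv
        rw [List.mem_cons] at hv
        rcases hv with rfl | hv
        · exact hwL
        · exact hp v hv) (by simp [br, hww', hb])
      simp at this
    · obtain ⟨s, t, hst⟩ := List.append_of_mem hin
      have hperm : ((w' :: (a :: s).reverse) ++ t).Perm (a :: p') := by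
        rw [hst]
        have h1 : ((w' :: (a :: s).reverse) ++ t).Perm ((w' :: (a :: s)) ++ t) :=
          List.Perm.append_right _ (List.Perm.cons _ (List.reverse_perm _))
        refine h1.trans ?_
        have h2 := List.perm_middle (a := w') (l₁ := a :: s) (l₂ := t)
        simpa using h2.symm
      have hbr0 : br G ((w' :: (a :: s).reverse) ++ t) = 0 := by
        have e1 : br G ((a :: s) ++ (w' :: t)) = 0 := by rw [← hb, hst]; simp
        obtain ⟨z, hz⟩ : ∃ z, (a :: s).getLast? = some z := by
          cases h : (a :: s).getLast? with
          | none => simp at h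
          | some z => exact ⟨z, rfl⟩
        have e2 := br_append G (a :: s) (w' :: t) z w' hz (by simp)
        have e3 : br G (w' :: (a :: s).reverse) =
            (if G.Adj w' z then 0 else 1) + br G (a :: s) := by
          have := br_append G [w'] (a :: s).reverse w' z (by simp)
            (by rw [List.head?_reverse, hz])
          rw [br_reverse] at this
          simpa [br] using this
        have e5 : G.Adj z w' := by
          by_contra hh
          simp only [hh, if_false] at e2
          omega
        simp only [e5, e5.symm, if_true] at e2 e3
        cases t with
        | nil => rw [List.append_nil]; omega
        | cons y t =>
          have e4 := br_append G (w' :: (a :: s).reverse) (y :: t) a y (by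
            rw [List.reverse_cons, ← List.cons_append, List.getLast?_append]; simp) (by simp)
          have e6 : G.Adj a y := hadj y (by rw [hst]; simp)
          have e7 : br G (y :: t) ≤ br G (w' :: y :: t) := by simp [br]
          simp only [e6, if_true] at e4
          omega
      have := hmax (w :: ((w' :: (a :: s).reverse) ++ t)) (by
        rw [List.nodup_cons]
        exact ⟨fun h => hwp (hperm.mem_iff.mp h), hperm.nodup_iff.mpr hnd⟩) (by
        intro v hv
        rw [List.mem_cons] at hv
        rcases hv with rfl | hv
        · exact hwL
        · exact hp v (hperm.mem_iff.mp hv)) (by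
        rw [List.cons_append] at hbr0 ⊢
        simp only [br, hww', hbr0, if_true])
      rw [List.length_cons, hperm.length_eq] at this
      omega
  · have hne' : w ≠ w' := fun h => G.loopless.irrefl w (h ▸ hww')
    apply extend_list G L r ((a :: p') ++ [w, w'])
    · rw [List.nodup_append]
      refine ⟨hnd, by simp [hne'], ?_⟩
      rintro x hx y hy rfl
      simp at hy
      rcases hy with rfl | rfl
      · exact hwp hx
      · exact hin hx
    · intro v hv
      rw [List.mem_append] at hv
      rcases hv with hv | hv
      · exact hp v hv
      · simp at hv
        rcases hv with rfl | rfl <;> assumption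
    · have := br_append_le G (a :: p') [w, w']
      have e : br G [w, w'] = 0 := by simp [br, hww']
      have : ((a :: p') ++ [w, w']).length = r + 3 := by simp [hlr]
      omega

lemma cov_of_struct [Fintype V] (G : SimpleGraph V) (k r : ℕ) (hk : 1 ≤ k) (hr : 1 ≤ r)
    (L D : Finset V) (hDL : Disjoint D L)
    (hC : ∀ a b, a ∉ L → b ∉ L → a ≠ b → G.Adj a b)
    (hD : ∀ d ∈ D, ∀ w, w ≠ d → G.Adj d w) (hD1 : 1 ≤ D.card)
    (hcard : L.card = k + D.card + r)
    (hdeg : ∀ w ∈ L, r ≤ (L.filter (fun x => G.Adj w x)).card) : Cov G k := by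
  obtain ⟨l, h1, h2, h3⟩ := linear_forest G L r hr (by omega) hdeg
  set K : Finset V := Finset.univ \ (L ∪ D) with hK
  have hKb : br G K.toList = 0 := by
    apply br_clique G _ (Finset.nodup_toList _)
    intro a ha b hb hab
    simp [hK] at ha hb
    exact hC a b (fun h => ha.1 h) (fun h => hb.1 h) hab
  have hb := br_append_le G K.toList l
  have hnd : (D.toList ++ (K.toList ++ l)).Nodup := by
    rw [List.nodup_append, List.nodup_append]
    refine ⟨Finset.nodup_toList _, ⟨Finset.nodup_toList _, h1, ?_⟩, ?_⟩
    · rintro a ha b hb rfl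
      simp [hK] at ha
      exact ha.1 ((h2 a).mp hb)
    · rintro a ha b hb rfl
      simp [hK] at ha hb
      rcases hb with hb | hb
      · exact hb.2 ha
      · exact Finset.disjoint_left.mp hDL ha ((h2 a).mp hb)
  obtain ⟨l', hp, hb'⟩ := insert_dom G D.toList (K.toList ++ l) hnd (by simpa using hD)
  refine ⟨l', hp.nodup_iff.mpr hnd, ?_, ?_⟩
  · intro v
    rw [hp.mem_iff]
    simp [hK, h2]
    tauto
  · rw [Finset.length_toList] at hb'
    omega

lemma cov_complete [Fintype V] (G : SimpleGraph V) (k : ℕ) (hk : 1 ≤ k)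
    (h : ∀ a b, a ≠ b → G.Adj a b) : Cov G k := by
  refine ⟨Finset.univ.toList, Finset.nodup_toList _, by simp, ?_⟩
  rw [br_clique G _ (Finset.nodup_toList _) (fun a _ b _ hab => h a b hab)]
  omega

end Build

lemma arith_h (k δ q s : ℤ) (hk : 1 ≤ k) (hδ : 2 ≤ δ) (hs : 0 ≤ s)
    (hq1 : δ ^ 2 * (δ + k) + 4 ≤ q) (hq2 : 4 * k + 5 * δ + 5 ≤ q)
    (hh : δ + s ≤ q - s)
    (hE : (q + 1) * q + δ * (δ + k) ≤ (q + 1 + k + δ) * (q - s) + (k + (δ + s)) * (δ + s)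
      - ((q - s) - (δ + s)) * (δ + s + k)) : s = 0 := by
  by_contra hne
  have hs1 : 1 ≤ s := by omega
  obtain ⟨W, hW⟩ : ∃ W, W = δ * (δ + k) := ⟨_, rfl⟩
  have hW1 : 3 * δ ≤ W := by rw [hW]; nlinarith
  have hW2 : 2 * W + 4 ≤ q := by
    have : δ ^ 2 * (δ + k) = δ * W := by rw [hW]; ring
    nlinarith
  have key : s * (2 * q + 1 - 2 * k - 4 * δ - 3 * s) ≤ W := by rw [hW]; nlinarith
  have hB : 4 ≤ 2 * q + 1 - 2 * k - 4 * δ - 3 * s := by omega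
  rcases le_or_gt q (4 * s) with h | h
  · nlinarith
  · have : 2 * q + 1 - 2 * k - 4 * δ - 3 * s ≤ W := by nlinarith
    omega

section Struct
open Classical

variable {V : Type*} [Fintype V]

lemma struct_H (G : SimpleGraph V) (k δ q : ℕ) (hk : 1 ≤ k) (hδ : 2 ≤ δ)
    (hcard : Fintype.card V = q + 1 + k + δ)
    (hq1 : δ ^ 2 * (δ + k) + 4 ≤ q) (hq2 : 4 * k + 5 * δ + 5 ≤ q)
    (hconn : G.Connected) (hmin : ∀ v, δ ≤ G.degree v)
    (hP : ∀ u v, u ≠ v → ¬ G.Adj u v → G.degree u + G.degree v + k + 1 ≤ q + 1 + k + δ)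
    (hE : ((q + 1) * q + δ * (δ + k) : ℤ) ≤ ∑ v, (G.degree v : ℤ))
    (hcov : ¬ Cov G k) :
    ∃ L D : Finset V, L.card = δ + k ∧ D.card = δ ∧ Disjoint D L ∧
      (∀ a b, a ∉ L → b ∉ L → a ≠ b → G.Adj a b) ∧
      (∀ d ∈ D, ∀ w, w ≠ d → G.Adj d w) ∧
      (∀ w ∈ L, ∀ x, G.Adj w x → x ∈ D) := by
  have hW2 : δ * (δ + k) + δ < q := by
    have h1 : δ ^ 2 * (δ + k) = δ * (δ * (δ + k)) := by ring
    have h2 : 2 * (δ * (δ + k)) ≤ δ * (δ * (δ + k)) := Nat.mul_le_mul_right _ hδ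
    have h3 : δ ≤ δ * (δ + k) := Nat.le_mul_of_pos_right _ (by omega)
    omega
  -- extremal non-adjacent pair
  have hnc : ∃ p : V × V, p.1 ≠ p.2 ∧ ¬ G.Adj p.1 p.2 := by
    by_contra h
    push Not at h
    exact hcov (cov_complete G k hk (fun a b hab => h (a, b) hab))
  obtain ⟨p, hpm, hpmax⟩ := Finset.exists_max_image
    (Finset.univ.filter (fun p : V × V => p.1 ≠ p.2 ∧ ¬ G.Adj p.1 p.2))
    (fun p => G.degree p.1 + G.degree p.2)
    (by obtain ⟨p, hp⟩ := hnc; exact ⟨p, by simpa using hp⟩)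
  have hex : ∃ u v, u ≠ v ∧ ¬ G.Adj u v ∧ G.degree u ≤ G.degree v ∧
      ∀ a b, a ≠ b → ¬ G.Adj a b → G.degree a + G.degree b ≤ G.degree u + G.degree v := by
    simp only [Finset.mem_filter, Finset.mem_univ, true_and] at hpm hpmax
    rcases le_total (G.degree p.1) (G.degree p.2) with h | h
    · exact ⟨p.1, p.2, hpm.1, hpm.2, h, fun a b h1 h2 => hpmax (a, b) ⟨h1, h2⟩⟩
    · refine ⟨p.2, p.1, hpm.1.symm, fun h => hpm.2 h.symm, h, fun a b h1 h2 => ?_⟩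
      have := hpmax (a, b) ⟨h1, h2⟩
      simp only at this
      omega
  obtain ⟨u, v, huv, hnadj, hle, hmax⟩ := hex
  have huvP := hP u v huv hnadj
  have hcn : ∀ v, (Finset.univ.filter (fun w => w ≠ v ∧ ¬ G.Adj w v)).card + G.degree v + 1
      = q + 1 + k + δ := by
    intro v
    rw [← hcard, ← Finset.card_univ (α := V), ← G.card_neighborFinset_eq_degree,
      ← Finset.card_union_of_disjoint, ← Finset.card_insert_of_notMem (a := v)]
    · congr 1
      ext w
      by_cases h1 : w = v <;> by_cases h2 : G.Adj w v <;> simp [h1, h2, G.adj_comm v w]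
    · simp
    · rw [Finset.disjoint_left]
      intro w hw hw2
      simp at hw hw2
      exact hw.2 hw2.symm
  have hdegle : ∀ w, G.degree w + 1 ≤ q + 1 + k + δ := by
    intro w; have := hcn w; omega
  obtain ⟨s, hs⟩ : ∃ s, G.degree u = δ + s := ⟨G.degree u - δ, by have := hmin u; omega⟩
  set N1 := Finset.univ.filter (fun w => w ≠ v ∧ ¬ G.Adj w v) with hN1
  have hN1c := hcn v
  rw [← hN1] at hN1c
  have hN1d : ∀ w ∈ N1, G.degree w ≤ G.degree u := by
    intro w hw
    rw [hN1, Finset.mem_filter] at hw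
    have := hmax w v hw.2.1 hw.2.2
    omega
  have hs0 : s = 0 := by
    have hpt : ∀ w, (G.degree w : ℤ) ≤ (q - s : ℤ) +
        (if w ∈ G.neighborFinset u then (k + (δ + s) : ℤ) else 0) -
        (if w ∈ N1 then ((q - s : ℤ) - (δ + s)) else 0) := by
      intro w
      have h1 := hdegle w
      have h2 := hN1d w
      have h3 : w ∉ G.neighborFinset u → G.degree w ≤ G.degree v := by
        intro hw
        rw [SimpleGraph.mem_neighborFinset] at hw
        by_cases hwu : w = u
        · rw [hwu]; exact hle
        · have := hmax u w (Ne.symm hwu) hw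
          omega
      split_ifs with ha hb hb
      · have := h2 hb; omega
      · omega
      · have := h2 hb; omega
      · have := h3 ha; omega
    have hsum := Finset.sum_le_sum (fun w (_ : w ∈ Finset.univ) => hpt w)
    rw [Finset.sum_sub_distrib, Finset.sum_add_distrib, Finset.sum_ite_mem,
      Finset.sum_ite_mem, Finset.univ_inter, Finset.univ_inter] at hsum
    simp only [Finset.sum_const, Finset.card_univ, hcard, SimpleGraph.card_neighborFinset_eq_degree,
      nsmul_eq_mul] at hsum
    have hNc : δ + s + k ≤ N1.card := by omega
    have hmul : ((q - s : ℤ) - (δ + s)) * (δ + s + k) ≤ N1.card * ((q - s : ℤ) - (δ + s)) := by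
      rw [mul_comm (N1.card : ℤ)]
      apply mul_le_mul_of_nonneg_left
      · exact_mod_cast hNc
      · omega
    rw [hs] at hsum
    have := arith_h k δ q s (by exact_mod_cast hk) (by exact_mod_cast hδ) (by positivity)
      (by exact_mod_cast hq1) (by exact_mod_cast hq2) (by omega)
      (by push_cast at hsum; linarith)
    exact_mod_cast this
  subst hs0
  -- low degree and dominating vertices
  set L := Finset.univ.filter (fun w => G.degree w = δ) with hL
  set D := Finset.univ.filter (fun w => ∀ x, x ≠ w → G.Adj w x) with hD
  have hDdom : ∀ d ∈ D, ∀ w, w ≠ d → G.Adj d w := by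
    intro d hd
    rw [hD, Finset.mem_filter] at hd
    exact hd.2
  have hDdeg : ∀ d ∈ D, G.degree d + 1 = q + 1 + k + δ := by
    intro d hd
    have := hcn d
    have h0 : (Finset.univ.filter (fun w => w ≠ d ∧ ¬ G.Adj w d)).card = 0 := by
      rw [Finset.card_eq_zero, Finset.filter_eq_empty_iff]
      intro w _ h
      exact h.2 (hDdom d hd w h.1).symm
    omega
  have hDL : Disjoint D L := by
    rw [Finset.disjoint_left]
    intro w h1 h2
    rw [hL, Finset.mem_filter] at h2
    have := hDdeg w h1
    omega
  have hnD : ∀ w, w ∉ D → G.degree w ≤ q := by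
    intro w hw
    rw [hD, Finset.mem_filter] at hw
    push Not at hw
    obtain ⟨x, hx, hxa⟩ := hw (Finset.mem_univ _)
    have := hP w x hx.symm hxa
    have := hmin x
    omega
  have hN1L : N1 ⊆ L := by
    intro w hw
    have := hN1d w hw
    have := hmin w
    simp [hL]
    omega
  have hLge : δ + k ≤ L.card := by
    have := Finset.card_le_card hN1L
    omega
  have hLdeg : ∀ w ∈ L, G.degree w = δ := by
    intro w hw
    rw [hL, Finset.mem_filter] at hw
    exact hw.2
  have hDnb : ∀ w ∈ L, D ⊆ G.neighborFinset w := by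
    intro w hw d hd
    rw [SimpleGraph.mem_neighborFinset]
    refine (hDdom d hd w ?_).symm
    rintro rfl
    exact Finset.disjoint_left.mp hDL hd hw
  have hDle : D.card ≤ δ := by
    have huL : u ∈ L := by simp [hL, hs]
    have := Finset.card_le_card (hDnb u huL)
    rw [G.card_neighborFinset_eq_degree, hs] at this
    simpa using this
  have hpt : ∀ w, 0 ≤ (q : ℤ) + (if w ∈ D then (k + δ : ℤ) else 0) -
        (if w ∈ L then ((q : ℤ) - δ) else 0) - G.degree w := by
    intro w
    have h1 := hdegle w
    have h2 := hLdeg w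
    have h3 := hnD w
    split_ifs with ha hb hb
    · have := h2 hb; omega
    · omega
    · have := h2 hb; omega
    · have := h3 ha; omega
  have hslack : ∑ w, ((q : ℤ) + (if w ∈ D then (k + δ : ℤ) else 0) -
        (if w ∈ L then ((q : ℤ) - δ) else 0) - G.degree w) ≤
      (q + 1 + k + δ) * q + δ * (k + δ) - L.card * (q - δ) - ((q + 1) * q + δ * (δ + k)) := by
    rw [Finset.sum_sub_distrib, Finset.sum_sub_distrib, Finset.sum_add_distrib,
      Finset.sum_ite_mem, Finset.sum_ite_mem, Finset.univ_inter, Finset.univ_inter]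
    simp only [Finset.sum_const, Finset.card_univ, hcard, nsmul_eq_mul]
    have : (D.card : ℤ) * (k + δ) ≤ δ * (k + δ) := by
      apply mul_le_mul_of_nonneg_right
      · exact_mod_cast hDle
      · positivity
    push_cast
    linarith
  have hWz : (δ * (δ + k) + δ : ℤ) < q := by exact_mod_cast hW2
  have hLc : L.card = δ + k := by
    by_contra hne
    have hgt : ((δ + k + 1 : ℕ) : ℤ) ≤ L.card := by
      have : δ + k + 1 ≤ L.card := by omega
      exact_mod_cast this
    have h0 := (Finset.sum_nonneg (fun w (_ : w ∈ Finset.univ) => hpt w)).trans hslack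
    have : ((δ + k + 1 : ℕ) : ℤ) * (q - δ) ≤ L.card * (q - δ) := by
      apply mul_le_mul_of_nonneg_right hgt
      nlinarith
    push_cast at this
    nlinarith
  have hclique : ∀ a b, a ∉ L → b ∉ L → a ≠ b → G.Adj a b := by
    intro a b ha hb hab
    by_contra hn
    have haD : a ∉ D := fun h => hn (hDdom a h b hab.symm)
    have hbD : b ∉ D := fun h => hn (hDdom b h a hab).symm
    have h1 := Finset.sum_le_sum_of_subset_of_nonneg (Finset.subset_univ {a, b})
      (fun w _ _ => hpt w)
    rw [Finset.sum_pair hab] at h1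
    have h2 := h1.trans hslack
    rw [hLc] at h2
    simp only [ha, hb, haD, hbD, if_false] at h2
    have h3 := hP a b hab hn
    push_cast at h2
    zify at h3
    nlinarith
  have hLC : ∀ c w, c ∉ L → w ∈ L → G.Adj c w → c ∈ D := by
    intro c w hc hw hcw
    by_contra hcD
    have h1 := hnD c hcD
    have h2 : insert w ((Finset.univ \ L).erase c) ⊆ G.neighborFinset c := by
      intro x hx
      rw [SimpleGraph.mem_neighborFinset]
      rw [Finset.mem_insert] at hx
      rcases hx with rfl | hx
      · exact hcw
      · simp at hx
        exact hclique c x hc hx.2 (Ne.symm hx.1)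
    have h3 := Finset.card_le_card h2
    rw [Finset.card_insert_of_notMem (by simp [hw]), Finset.card_erase_of_mem (by simp [hc]),
      Finset.card_sdiff_of_subset (Finset.subset_univ _), Finset.card_univ, hcard,
      G.card_neighborFinset_eq_degree] at h3
    omega
  have hD1 : 1 ≤ D.card := by
    obtain ⟨w, hw⟩ : L.Nonempty := Finset.card_pos.mp (by omega)
    obtain ⟨c, hc⟩ : ∃ c, c ∉ L := by
      by_contra h
      push Not at h
      have : L = Finset.univ := by ext x; simp [h x]
      rw [this, Finset.card_univ] at hLc
      omega
    obtain ⟨x, hx, y, hy, hxy⟩ :=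
      hconn.preconnected.exists_isPath w c |>.elim fun p _ =>
        p.exists_boundary_dart (L : Set V) (by simpa using hw) (by simpa using hc) |>.elim
          fun d hd => (⟨d.fst, by simpa using hd.2.1, d.snd, by simpa using hd.2.2, d.adj⟩ :
            ∃ x, x ∈ L ∧ ∃ y, y ∉ L ∧ G.Adj x y)
    exact Finset.card_pos.mpr ⟨y, hLC y x hy hx hxy.symm⟩
  have hDeq : D.card = δ := by
    by_contra hne
    apply hcov
    refine cov_of_struct G k (δ - D.card) hk (by omega) L D hDL hclique hDdom hD1 (by omega) ?_
    intro w hw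
    have h1 : G.neighborFinset w ⊆ D ∪ L.filter (fun x => G.Adj w x) := by
      intro x hx
      rw [SimpleGraph.mem_neighborFinset] at hx
      by_cases hxL : x ∈ L
      · simp [hxL, hx]
      · simp [hLC x w hxL hw hx.symm]
    have h2 := (Finset.card_le_card h1).trans (Finset.card_union_le _ _)
    rw [G.card_neighborFinset_eq_degree, hLdeg w hw] at h2
    omega
  refine ⟨L, D, hLc, hDeq, hDL, hclique, hDdom, ?_⟩
  intro w hw x hx
  have : D = G.neighborFinset w := by
    apply Finset.eq_of_subset_of_card_le (hDnb w hw)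
    rw [G.card_neighborFinset_eq_degree, hLdeg w hw, hDeq]
  rw [this]
  simpa using hx

end Struct

section Spectral
open Classical

variable {V : Type*}

/-- 0/1 adjacency indicator. -/
noncomputable def adjInd (G : SimpleGraph V) (v w : V) : ℝ := if G.Adj v w then 1 else 0

lemma adjInd_comm (G : SimpleGraph V) (v w : V) : adjInd G v w = adjInd G w v := by
  simp [adjInd, G.adj_comm v w]

lemma adjInd_nonneg (G : SimpleGraph V) (v w : V) : 0 ≤ adjInd G v w := by
  unfold adjInd; split_ifs <;> norm_num

lemma adjInd_le_one (G : SimpleGraph V) (v w : V) : adjInd G v w ≤ 1 := by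
  unfold adjInd; split_ifs <;> norm_num

variable [Fintype V]

lemma sum_adjInd (G : SimpleGraph V) (v : V) (f : V → ℝ) :
    ∑ w, adjInd G v w * f w = ∑ w ∈ G.neighborFinset v, f w := by
  rw [SimpleGraph.neighborFinset_eq_filter, Finset.sum_filter]
  exact Finset.sum_congr rfl fun w _ => by simp [adjInd]

lemma sum_adjInd_one (G : SimpleGraph V) (v : V) :
    ∑ w, adjInd G v w = G.degree v := by
  have := sum_adjInd G v (fun _ => 1)
  simpa using this

/-- `y` is a nonzero nonnegative vector with `A y ≥ μ y`. -/
def SubInv (G : SimpleGraph V) (μ : ℝ) (y : V → ℝ) : Prop :=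
  (∀ v, 0 ≤ y v) ∧ (∃ v, 0 < y v) ∧ ∀ v, μ * y v ≤ ∑ w, adjInd G v w * y w

lemma SubInv.mono {G H : SimpleGraph V} {μ : ℝ} {y : V → ℝ} (h : SubInv G μ y) (hGH : G ≤ H) :
    SubInv H μ y := by
  refine ⟨h.1, h.2.1, fun v => (h.2.2 v).trans ?_⟩
  apply Finset.sum_le_sum
  intro w _
  apply mul_le_mul_of_nonneg_right _ (h.1 w)
  unfold adjInd
  by_cases hg : G.Adj v w
  · simp [hg, hGH hg]
  · simp only [hg, if_false]; split_ifs <;> norm_num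

lemma exists_subInv [DecidableEq V] (G : SimpleGraph V) [DecidableRel G.Adj] (μ : ℝ) (hμ : 0 < μ)
    (hl : μ ≤ adjSpecRad G) : ∃ y, SubInv G μ y := by
  set S := {μ : ℝ | ∃ x : V → ℝ, x ≠ 0 ∧ G.adjMatrix ℝ *ᵥ x = μ • x} with hS
  have hfin : S.Finite := by
    refine (Module.End.finite_hasEigenvalue (Matrix.toLin' (G.adjMatrix ℝ))).subset ?_
    rintro ν ⟨x, hx, hxe⟩
    exact Module.End.hasEigenvalue_of_hasEigenvector
      (x := x) ⟨Module.End.mem_eigenspace_iff.mpr (by simpa using hxe), hx⟩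
  have hne : S.Nonempty := by
    by_contra h
    rw [Set.not_nonempty_iff_eq_empty] at h
    have : adjSpecRad G = 0 := by
      unfold adjSpecRad
      rw [← hS, h, Real.sSup_empty]
    linarith
  obtain ⟨x, hx, hxe⟩ : adjSpecRad G ∈ S := hne.csSup_mem hfin
  refine ⟨fun v => |x v|, fun v => abs_nonneg _, ?_, fun v => ?_⟩
  · obtain ⟨v, hv⟩ := Function.ne_iff.mp hx
    exact ⟨v, abs_pos.mpr hv⟩
  · have h1 := congrFun hxe v
    have h2 : (G.adjMatrix ℝ *ᵥ x) v = ∑ w, adjInd G v w * x w := by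
      simp only [Matrix.mulVec, dotProduct, SimpleGraph.adjMatrix_apply, adjInd]
      exact Finset.sum_congr rfl fun w _ => by split_ifs <;> rfl
    rw [h2] at h1
    simp only [Pi.smul_apply, smul_eq_mul] at h1
    calc μ * |x v| ≤ adjSpecRad G * |x v| := mul_le_mul_of_nonneg_right hl (abs_nonneg _)
      _ = |adjSpecRad G * x v| := by rw [abs_mul, abs_of_pos (hμ.trans_le hl)]
      _ = |∑ w, adjInd G v w * x w| := by rw [h1]
      _ ≤ ∑ w, |adjInd G v w * x w| := Finset.abs_sum_le_sum_abs _ _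
      _ = ∑ w, adjInd G v w * |x w| := by
        refine Finset.sum_congr rfl fun w _ => ?_
        rw [abs_mul, abs_of_nonneg (adjInd_nonneg G v w)]

lemma edge_bound_s3 (G : SimpleGraph V) (μ δ : ℝ) (hμ : 0 ≤ μ) (y : V → ℝ)
    (hy : SubInv G μ y) (hmin : ∀ v, δ ≤ G.degree v) :
    μ * (μ - δ + 1) ≤ ∑ v, (G.degree v : ℝ) - (Fintype.card V - 1) * δ := by
  obtain ⟨h0, ⟨v0, hv0⟩, h⟩ := hy
  have hpos : 0 < ∑ v, y v := Finset.sum_pos' (fun v _ => h0 v) ⟨v0, Finset.mem_univ _, hv0⟩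
  have hloc : ∀ v, ∑ w, adjInd G v w * ((G.degree w : ℝ) - (δ - 1)) ≤
      ∑ v, (G.degree v : ℝ) - (Fintype.card V - 1) * δ := by
    intro v
    have e1 : ∑ w, adjInd G v w * ((G.degree w : ℝ) - (δ - 1)) =
        ∑ w ∈ G.neighborFinset v, ((G.degree w : ℝ) - δ) + G.degree v := by
      rw [sum_adjInd, ← G.card_neighborFinset_eq_degree v, Finset.card_eq_sum_ones]
      push_cast
      rw [← Finset.sum_add_distrib]
      exact Finset.sum_congr rfl fun w _ => by ring
    have e2 : ∑ w ∈ insert v (G.neighborFinset v), ((G.degree w : ℝ) - δ) ≤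
        ∑ w, ((G.degree w : ℝ) - δ) :=
      Finset.sum_le_sum_of_subset_of_nonneg (Finset.subset_univ _)
        (fun w _ _ => sub_nonneg.mpr (hmin w))
    rw [Finset.sum_insert (by simp), Finset.sum_sub_distrib (s := Finset.univ)] at e2
    simp only [Finset.sum_const, Finset.card_univ, nsmul_eq_mul] at e2
    linarith
  have hsw : ∑ w, ((G.degree w : ℝ) - (δ - 1)) * ∑ v, adjInd G w v * y v =
      ∑ v, y v * ∑ w, adjInd G v w * ((G.degree w : ℝ) - (δ - 1)) := by
    simp only [Finset.mul_sum]
    rw [Finset.sum_comm]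
    refine Finset.sum_congr rfl fun v _ => Finset.sum_congr rfl fun w _ => ?_
    rw [adjInd_comm G w v]; ring
  have hsw2 : ∑ w, (G.degree w : ℝ) * y w = ∑ v, ∑ w, adjInd G v w * y w := by
    rw [Finset.sum_comm]
    refine Finset.sum_congr rfl fun v _ => ?_
    rw [← Finset.sum_mul, ← sum_adjInd_one]
    congr 1
    exact Finset.sum_congr rfl fun w _ => adjInd_comm G v w
  have hA : ∑ v, y v * ∑ w, adjInd G v w * ((G.degree w : ℝ) - (δ - 1)) ≤
      (∑ v, y v) * (∑ v, (G.degree v : ℝ) - (Fintype.card V - 1) * δ) := by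
    rw [Finset.sum_mul]
    exact Finset.sum_le_sum fun v _ => mul_le_mul_of_nonneg_left (hloc v) (h0 v)
  have hB : ∑ w, ((G.degree w : ℝ) - (δ - 1)) * (μ * y w) ≤
      ∑ w, ((G.degree w : ℝ) - (δ - 1)) * ∑ v, adjInd G w v * y v :=
    Finset.sum_le_sum fun w _ => mul_le_mul_of_nonneg_left (h w)
      (by have := hmin w; linarith)
  have hC : ∑ w, ((G.degree w : ℝ) - (δ - 1)) * (μ * y w) =
      μ * (∑ w, (G.degree w : ℝ) * y w - (δ - 1) * ∑ w, y w) := by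
    rw [Finset.mul_sum, ← Finset.sum_sub_distrib, Finset.mul_sum]
    exact Finset.sum_congr rfl fun w _ => by ring
  have hD : μ * ∑ w, y w ≤ ∑ w, (G.degree w : ℝ) * y w := by
    rw [hsw2, Finset.mul_sum]
    exact Finset.sum_le_sum fun w _ => h w
  have hF : μ * (μ - δ + 1) * ∑ v, y v ≤
      (∑ v, (G.degree v : ℝ) - (Fintype.card V - 1) * δ) * ∑ v, y v := by
    have := mul_le_mul_of_nonneg_left hD hμ
    nlinarith
  exact le_of_mul_le_mul_right hF hpos

set_option maxHeartbeats 800000 in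
lemma rigidity (G : SimpleGraph V) (k δ q : ℕ) (hk : 1 ≤ k) (hδ : 2 ≤ δ)
    (hcard : Fintype.card V = q + 1 + k + δ) (hq1 : δ ^ 2 * (δ + k) + 4 ≤ q)
    (L D : Finset V) (hL : L.card = δ + k) (hDc : D.card = δ) (hDL : Disjoint D L)
    (hLN : ∀ w ∈ L, ∀ x, G.Adj w x → x ∈ D)
    (p r : V) (hp : p ∉ L) (hr : r ∉ L) (hpr : p ≠ r) (hnadj : ¬ G.Adj p r)
    (y : V → ℝ) (hy : SubInv G q y) : False := by
  obtain ⟨h0, ⟨v0, hv0⟩, h⟩ := hy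
  set C := Finset.univ \ L with hC
  have hmC : ∀ v, v ∈ C ↔ v ∉ L := by simp [hC]
  have hCc : (C.card : ℝ) = q + 1 := by
    have : C.card = q + 1 := by
      rw [hC, Finset.card_sdiff_of_subset (Finset.subset_univ _), Finset.card_univ, hcard, hL]
      omega
    rw [this]; push_cast; ring
  obtain ⟨v, hvC, hvmax⟩ := Finset.exists_max_image C y ⟨p, (hmC p).mpr hp⟩
  have hsplit : ∀ f : V → ℝ, ∑ w, f w = ∑ w ∈ C, f w + ∑ w ∈ L, f w := by
    intro f
    rw [hC, Finset.sum_sdiff (Finset.subset_univ L)]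
  set M := y v with hM
  set T := ∑ w ∈ L, y w with hT
  have hM0 : 0 ≤ M := h0 v
  have hT0 : 0 ≤ T := Finset.sum_nonneg fun w _ => h0 w
  have hqpos : (0 : ℝ) < q := by
    have : 0 < q := by omega
    exact_mod_cast this
  have s1 : ∀ x ∈ L, (q : ℝ) * y x ≤ δ * M := by
    intro x hx
    refine (h x).trans ?_
    rw [sum_adjInd]
    calc ∑ w ∈ G.neighborFinset x, y w ≤ ∑ w ∈ D, y w := by
          apply Finset.sum_le_sum_of_subset_of_nonneg
          · intro w hw
            exact hLN x hx w (by simpa using hw)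
          · intro w _ _; exact h0 w
      _ ≤ ∑ w ∈ D, M := Finset.sum_le_sum fun w hw =>
          hvmax w ((hmC w).mpr (Finset.disjoint_left.mp hDL hw))
      _ = δ * M := by rw [Finset.sum_const, hDc, nsmul_eq_mul]
  have s1' : (q : ℝ) * T ≤ (δ + k) * (δ * M) := by
    rw [hT, Finset.mul_sum]
    refine (Finset.sum_le_sum s1).trans ?_
    rw [Finset.sum_const, hL, nsmul_eq_mul]
    push_cast
    exact le_refl _
  have s2 : q * M ≤ ∑ w ∈ C, adjInd G v w * y w + T := by
    refine (h v).trans ?_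
    rw [hsplit]
    have : ∑ w ∈ L, adjInd G v w * y w ≤ T := by
      rw [hT]
      refine Finset.sum_le_sum fun w _ => ?_
      have := adjInd_le_one G v w
      nlinarith [h0 w]
    linarith
  have s4 : ∑ w ∈ C, (M - adjInd G v w * y w) ≤ M + T := by
    rw [Finset.sum_sub_distrib, Finset.sum_const, nsmul_eq_mul, hCc]
    linarith
  have s4n : ∀ w ∈ C, 0 ≤ M - adjInd G v w * y w := by
    intro w hw
    have := hvmax w hw
    nlinarith [adjInd_le_one G v w, adjInd_nonneg G v w, h0 w]
  have s4s : ∀ S : Finset V, S ⊆ C → ∑ w ∈ S, (M - adjInd G v w * y w) ≤ M + T := by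
    intro S hS
    exact (Finset.sum_le_sum_of_subset_of_nonneg hS (fun w hw _ => s4n w hw)).trans s4
  have hvv : adjInd G v v = 0 := by simp [adjInd]
  have s5 : y p + y r ≤ δ * T := by
    have t1 : ∑ v ∈ C, (q : ℝ) * y v ≤ ∑ v ∈ C, ∑ w, adjInd G v w * y w :=
      Finset.sum_le_sum fun v _ => h v
    simp only [hsplit] at t1
    rw [Finset.sum_add_distrib, Finset.sum_comm, Finset.sum_comm (s := C) (t := L)] at t1
    simp only [← Finset.sum_mul] at t1
    have t2 : ∑ w ∈ L, (∑ v ∈ C, adjInd G v w) * y w ≤ δ * T := by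
      rw [hT, Finset.mul_sum]
      apply Finset.sum_le_sum
      intro w hw
      apply mul_le_mul_of_nonneg_right _ (h0 w)
      calc ∑ v ∈ C, adjInd G v w ≤ ∑ v, adjInd G v w :=
            Finset.sum_le_sum_of_subset_of_nonneg (Finset.subset_univ _)
              (fun v _ _ => adjInd_nonneg G v w)
        _ = ∑ v, adjInd G w v := Finset.sum_congr rfl fun v _ => adjInd_comm G v w
        _ = G.degree w := sum_adjInd_one G w
        _ ≤ δ := by
          rw [← hDc, ← G.card_neighborFinset_eq_degree]
          exact_mod_cast Finset.card_le_card (fun x hx => hLN w hw x (by simpa using hx))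
    have t3 : ∑ w ∈ C, (∑ v ∈ C, adjInd G v w) * y w ≤
        ∑ w ∈ C, ((q : ℝ) - (if w = p then 1 else 0) - (if w = r then 1 else 0)) * y w := by
      apply Finset.sum_le_sum
      intro w hw
      apply mul_le_mul_of_nonneg_right _ (h0 w)
      have : ∀ v ∈ C, adjInd G v w ≤ 1 - (if v = w then 1 else 0) -
          (if v = r then (if w = p then 1 else 0) else 0) -
          (if v = p then (if w = r then 1 else 0) else 0) := by
        intro v _
        by_cases h1 : G.Adj v w
        · have e1 : v ≠ w := h1.ne
          have e2 : ¬ (v = r ∧ w = p) := by rintro ⟨rfl, rfl⟩; exact hnadj h1.symm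
          have e3 : ¬ (v = p ∧ w = r) := by rintro ⟨rfl, rfl⟩; exact hnadj h1
          have e2' : (if v = r then (if w = p then (1 : ℝ) else 0) else 0) = 0 := by
            split_ifs <;> tauto
          have e3' : (if v = p then (if w = r then (1 : ℝ) else 0) else 0) = 0 := by
            split_ifs <;> tauto
          rw [e2', e3']
          simp [adjInd, h1, e1]
        · simp only [adjInd, h1, if_false]
          split_ifs <;> first | (exfalso; subst_vars; tauto) | norm_num
      refine (Finset.sum_le_sum this).trans ?_
      rw [Finset.sum_sub_distrib, Finset.sum_sub_distrib, Finset.sum_sub_distrib,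
        Finset.sum_ite_eq', Finset.sum_ite_eq', Finset.sum_ite_eq', Finset.sum_const,
        nsmul_eq_mul, hCc]
      simp only [hw, (hmC p).mpr hp, (hmC r).mpr hr, if_true]
      linarith
    have t4 : ∑ w ∈ C, ((q : ℝ) - (if w = p then 1 else 0) - (if w = r then 1 else 0)) * y w =
        ∑ w ∈ C, (q : ℝ) * y w - y p - y r := by
      simp only [sub_mul, ite_mul, one_mul, zero_mul]
      rw [Finset.sum_sub_distrib, Finset.sum_sub_distrib, Finset.sum_ite_eq', Finset.sum_ite_eq']
      simp only [(hmC p).mpr hp, (hmC r).mpr hr, if_true]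
    linarith
  have hMpos : 0 < M := by
    by_contra hM'
    have hMz : M = 0 := by linarith
    by_cases hv0L : v0 ∈ L
    · have := s1 v0 hv0L
      rw [hMz] at this
      nlinarith
    · have := hvmax v0 ((hmC v0).mpr hv0L)
      linarith
  have hδr : (2 : ℝ) ≤ δ := by exact_mod_cast hδ
  have hkr : (1 : ℝ) ≤ k := by exact_mod_cast hk
  have hq1r : (δ : ℝ) ^ 2 * (δ + k) + 4 ≤ q := by exact_mod_cast hq1
  have hfin : 2 * M ≤ (δ + 1) * T := by
    by_cases hvp : v = p
    · have := s4s {v, r} (by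
        intro w hw; simp at hw
        rcases hw with rfl | rfl
        · exact hvC
        · exact (hmC _).mpr hr)
      rw [Finset.sum_pair (by rw [hvp]; exact hpr), hvv] at this
      have e : adjInd G v r = 0 := by rw [hvp]; simp [adjInd, hnadj]
      rw [e] at this
      nlinarith
    · by_cases hvr : v = r
      · have := s4s {v, p} (by
          intro w hw; simp at hw
          rcases hw with rfl | rfl
          · exact hvC
          · exact (hmC _).mpr hp)
        rw [Finset.sum_pair hvp, hvv] at this
        have e : adjInd G v p = 0 := by 
          rw [hvr]; simp [adjInd, G.adj_comm r p, hnadj]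
        rw [e] at this
        nlinarith
      · have := s4s {v, p, r} (by
          intro w hw; simp at hw
          rcases hw with rfl | rfl | rfl
          · exact hvC
          · exact (hmC _).mpr hp
          · exact (hmC _).mpr hr)
        rw [Finset.sum_insert (by simp [hvp, hvr]), Finset.sum_pair hpr, hvv] at this
        have e1 : adjInd G v p * y p ≤ y p := by nlinarith [adjInd_le_one G v p, h0 p]
        have e2 : adjInd G v r * y r ≤ y r := by nlinarith [adjInd_le_one G v r, h0 r]
        linarith
  have f1 : 2 * q * M ≤ ((δ + 1) * (δ + k) * δ) * M := by
    have g1 := mul_le_mul_of_nonneg_left hfin hqpos.le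
    have g2 := mul_le_mul_of_nonneg_left s1' (by positivity : (0 : ℝ) ≤ δ + 1)
    linarith
  have f2 : (2 * q : ℝ) ≤ (δ + 1) * (δ + k) * δ := le_of_mul_le_mul_right f1 hMpos
  have f3 : (0 : ℝ) ≤ (δ - 2) * (δ * (δ + k)) :=
    mul_nonneg (sub_nonneg.mpr hδr) (by positivity)
  have f4 : (0 : ℝ) ≤ δ * (δ + k) := by positivity
  linarith

end Spectral

lemma card_filter_lt (n a : ℕ) (ha : a ≤ n) :
    (Finset.univ.filter (fun i : Fin n => (i : ℕ) < a)).card = a := by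
  have h := Finset.card_map (s := Finset.univ.filter (fun i : Fin n => (i : ℕ) < a))
    Fin.valEmbedding
  rw [← h]
  have : (Finset.univ.filter (fun i : Fin n => (i : ℕ) < a)).map Fin.valEmbedding =
      Finset.range a := by
    ext x
    simp
    constructor
    · rintro ⟨y, hy, rfl⟩; exact hy
    · intro hx; exact ⟨⟨x, by omega⟩, hx, rfl⟩
  rw [this, Finset.card_range]

lemma iso_of_struct (n k δ : ℕ) (hn : 2 * δ + k ≤ n) (G : SimpleGraph (Fin n))
    (L D : Finset (Fin n)) (hL : L.card = δ + k) (hD : D.card = δ) (hDL : Disjoint D L)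
    (hC : ∀ a b, a ∉ L → b ∉ L → a ≠ b → G.Adj a b)
    (hdom : ∀ d ∈ D, ∀ w, w ≠ d → G.Adj d w)
    (hLN : ∀ w ∈ L, ∀ x, G.Adj w x → x ∈ D) : Nonempty (G ≃g Bgraph n k δ) := by
  classical
  let f : Fin n → Fin 3 := fun x => if x ∈ D then 0 else if x ∈ L then 2 else 1
  let g : Fin n → Fin 3 := fun i => if (i : ℕ) < δ then 0 else if (i : ℕ) < n - (δ + k) then 1 else 2
  have hdj := Finset.disjoint_left.mp hDL
  have hcard : ∀ c, (Finset.univ.filter (fun x => f x = c)).card =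
      (Finset.univ.filter (fun x => g x = c)).card := by
    have e0 : Finset.univ.filter (fun x => f x = 0) = D := by
      ext x; simp [f]
      by_cases h1 : x ∈ D <;> by_cases h2 : x ∈ L <;> simp [h1, h2]
    have e2 : Finset.univ.filter (fun x => f x = 2) = L := by
      ext x; simp [f]
      by_cases h1 : x ∈ D
      · simp [h1, hdj h1]
      · by_cases h2 : x ∈ L <;> simp [h1, h2]
    have e1 : Finset.univ.filter (fun x => f x = 1) = Finset.univ \ (D ∪ L) := by
      ext x; simp [f]
      by_cases h1 : x ∈ D <;> by_cases h2 : x ∈ L <;> simp [h1, h2]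
    have g0 : Finset.univ.filter (fun x => g x = 0) =
        Finset.univ.filter (fun i : Fin n => (i : ℕ) < δ) := by
      ext x; simp [g]
      by_cases h1 : (x : ℕ) < δ <;> by_cases h2 : (x : ℕ) < n - (δ + k) <;> simp [h1, h2]
    have g1 : Finset.univ.filter (fun x => g x = 1) =
        Finset.univ.filter (fun i : Fin n => (i : ℕ) < n - (δ + k)) \
        Finset.univ.filter (fun i : Fin n => (i : ℕ) < δ) := by
      ext x; simp [g]
      by_cases h1 : (x : ℕ) < δ <;> by_cases h2 : (x : ℕ) < n - (δ + k) <;> simp [h1, h2] <;> omega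
    have g2 : Finset.univ.filter (fun x => g x = 2) =
        Finset.univ \ Finset.univ.filter (fun i : Fin n => (i : ℕ) < n - (δ + k)) := by
      ext x; simp [g]
      by_cases h1 : (x : ℕ) < δ <;> by_cases h2 : (x : ℕ) < n - (δ + k) <;> simp [h1, h2] <;> omega
    intro c
    fin_cases c
    · change (Finset.univ.filter (fun x => f x = 0)).card = (Finset.univ.filter (fun x => g x = 0)).card
      rw [e0, g0, card_filter_lt _ _ (by omega), hD]
    · change (Finset.univ.filter (fun x => f x = 1)).card = (Finset.univ.filter (fun x => g x = 1)).card
      rw [e1, g1, Finset.card_sdiff_of_subset (Finset.subset_univ _),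
        Finset.card_sdiff_of_subset (by intro x; simp; omega), card_filter_lt _ _ (by omega),
        card_filter_lt _ _ (by omega), Finset.card_union_of_disjoint hDL, hL, hD,
        Finset.card_univ, Fintype.card_fin]
      omega
    · change (Finset.univ.filter (fun x => f x = 2)).card = (Finset.univ.filter (fun x => g x = 2)).card
      rw [e2, g2, Finset.card_sdiff_of_subset (Finset.subset_univ _),
        card_filter_lt _ _ (by omega), hL, Finset.card_univ, Fintype.card_fin]
      omega
  have hfib : ∀ c, Nonempty ({x // f x = c} ≃ {x // g x = c}) := by
    intro c
    rw [← Fintype.card_eq, Fintype.card_subtype, Fintype.card_subtype]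
    exact hcard c
  let e : Fin n ≃ Fin n := Equiv.ofFiberEquiv (fun c => (hfib c).some)
  have he : ∀ x, g (e x) = f x := fun x => Equiv.ofFiberEquiv_map _ x
  have k1 : ∀ x, ((e x : ℕ) < δ ↔ x ∈ D) := by
    intro x
    have := he x
    simp only [f, g] at this
    split_ifs at this <;> simp_all
  have k2 : ∀ x, ((e x : ℕ) < n - (δ + k) ↔ x ∉ L) := by
    intro x
    have h3 := k1 x
    have := he x
    simp only [f, g] at this
    by_cases hx : x ∈ D
    · have h4 := h3.mpr hx
      have := hdj hx
      simp [this]; omega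
    · have h4 : ¬ (e x : ℕ) < δ := fun h => hx (h3.mp h)
      simp only [hx, h4, if_false] at this
      split_ifs at this <;> simp_all
  refine ⟨⟨e, ?_⟩⟩
  intro a b
  change (e a ≠ e b ∧ ((e a : ℕ) < δ ∨ (e b : ℕ) < δ ∨
      ((e a : ℕ) < n - (δ + k) ∧ (e b : ℕ) < n - (δ + k)))) ↔ G.Adj a b
  rw [k1, k1, k2, k2, e.injective.ne_iff]
  constructor
  · rintro ⟨hab, h | h | ⟨h1, h2⟩⟩
    · exact hdom a h b hab.symm
    · exact (hdom b h a hab).symm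
    · exact hC a b h1 h2 hab
  · intro h
    refine ⟨h.ne, ?_⟩
    by_cases ha : a ∈ L
    · right; left; exact hLN a ha b h
    · by_cases hb : b ∈ L
      · left; exact hLN b hb a h.symm
      · right; right; exact ⟨ha, hb⟩

/-- **Theorem 1.3** (Liu et al.): spectral radius condition for a connected graph with given
minimum degree to be k-path-coverable. -/
theorem specRad_kPathCoverable (k δ n : ℕ) (hk : 1 ≤ k) (hδ : 2 ≤ δ)
    (hn : max (δ ^ 2 * (δ + k) + δ + k + 5) (5 * k + 6 * δ + 6) ≤ n)
    (G : SimpleGraph (Fin n)) [DecidableRel G.Adj]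
    (hconn : G.Connected) (hmin : ∀ v, δ ≤ G.degree v)
    (hl : (n : ℝ) - δ - k - 1 ≤ adjSpecRad G) :
    PathCoverable G k ∨ Nonempty (G ≃g Bgraph n k δ) := by
  by_cases hcovG : Cov G k
  · exact Or.inl (pathCoverable_of_cov G k hcovG)
  right
  have hn1 := (le_max_left _ _).trans hn
  have hn2 := (le_max_right _ _).trans hn
  obtain ⟨q, hq⟩ : ∃ q, n = q + 1 + k + δ := ⟨n - 1 - k - δ, by omega⟩
  have hq1 : δ ^ 2 * (δ + k) + 4 ≤ q := by omega
  have hq2 : 4 * k + 5 * δ + 5 ≤ q := by omega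
  have hcard : Fintype.card (Fin n) = q + 1 + k + δ := by rw [Fintype.card_fin, hq]
  have hqn : (q : ℝ) = (n : ℝ) - δ - k - 1 := by rw [hq]; push_cast; ring
  have hqpos : (0 : ℝ) < q := by
    have : 0 < q := by omega
    exact_mod_cast this
  obtain ⟨y, hy⟩ := exists_subInv G (q : ℝ) hqpos (by rw [hqn]; exact hl)
  obtain ⟨H, hGH, hH⟩ := (Set.toFinite {H : SimpleGraph (Fin n) | ¬ Cov H k}).exists_le_maximal
    (a := G) hcovG
  have hcovH : ¬ Cov H k := hH.prop
  classical
  have hminH : ∀ v, δ ≤ H.degree v := fun v =>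
    (hmin v).trans (SimpleGraph.degree_le_of_le hGH)
  have hPH : ∀ u v, u ≠ v → ¬ H.Adj u v →
      H.degree u + H.degree v + k + 1 ≤ q + 1 + k + δ := by
    intro u v huv hnadj
    have hc : Cov (H ⊔ SimpleGraph.edge u v) k := by
      by_contra hc
      have h1 := hH.le_of_ge (y := H ⊔ SimpleGraph.edge u v) hc le_sup_left
      apply hnadj
      apply h1
      simp [SimpleGraph.edge_adj, huv]
    have := ore H k hk hcovH u v hnadj hc
    rw [hcard] at this
    convert this
  have hyH := hy.mono hGH
  have hE : ((q + 1) * q + δ * (δ + k) : ℤ) ≤ ∑ v, (H.degree v : ℤ) := by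
    have := edge_bound_s3 H q δ hqpos.le y hyH (fun v => by
      have := hminH v
      convert (Nat.cast_le (α := ℝ)).mpr this)
    rw [hcard] at this
    have h2 : ((q + 1) * q + δ * (δ + k) : ℝ) ≤ ∑ v, (H.degree v : ℝ) := by
      have h3 : ((q + 1) * q + δ * (δ + k) : ℝ) =
        q * (q - δ + 1) + (((q + 1 + k + δ : ℕ) : ℝ) - 1) * δ := by push_cast; ring
      rw [h3]
      convert le_sub_iff_add_le.mp this
    exact_mod_cast h2
  obtain ⟨L, D, hL, hD, hDL, hC, hdom, hLN⟩ := struct_H H k δ q hk hδ hcard hq1 hq2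
    (hconn.mono hGH) (by convert hminH) (by convert hPH) (by convert hE) hcovH
  have hGD : ∀ w ∈ L, ∀ x, G.Adj w x ↔ x ∈ D := by
    intro w hw x
    have : G.neighborFinset w = D := by
      apply Finset.eq_of_subset_of_card_le
      · intro z hz
        exact hLN w hw z (hGH (by simpa using hz))
      · rw [hD, G.card_neighborFinset_eq_degree]; exact hmin w
    rw [← this]; simp
  have hHG : H = G := by
    apply le_antisymm _ hGH
    intro a b hab
    by_cases ha : a ∈ L
    · exact (hGD a ha b).mpr (hLN a ha b hab)
    · by_cases hb : b ∈ L
      · exact ((hGD b hb a).mpr (hLN b hb a hab.symm)).symm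
      · by_contra hn
        exact rigidity G k δ q hk hδ hcard hq1 L D hL hD hDL
          (fun w hw x hx => (hGD w hw x).mp hx) a b ha hb hab.ne hn y hy
  subst hHG
  exact iso_of_struct n k δ (by omega) H L D hL hD hDL hC hdom hLN
end

section
/- The property of being k-path-coverable is (n−k)-stable: if G is a simple graph on n vertices, u and v are non-adjacent vertices of G with d_G(u) + d_G(v) ≥ n − k, and the graph G + uv obtained by adding the edge uv is k-path-coverable, then G itself is k-path-coverable. -/
open Finset Matrix

section Helpers

open Classical in
/-- Cost of a consecutive pair: `0` if adjacent, `1` otherwise. -/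
noncomputable def pcCost {V : Type*} (G : SimpleGraph V) (a b : V) : ℕ :=
  if G.Adj a b then 0 else 1

/-- Number of consecutive non-adjacent pairs of a list. -/
noncomputable def pcBreaks {V : Type*} (G : SimpleGraph V) : List V → ℕ
  | [] => 0
  | [_] => 0
  | a :: b :: l => pcCost G a b + pcBreaks G (b :: l)

variable {V : Type*} (G : SimpleGraph V)

theorem pcCost_comm (a b : V) : pcCost G a b = pcCost G b a := by
  unfold pcCost
  have := G.adj_comm a b
  split_ifs <;> tauto

theorem pcCost_le (a b : V) : pcCost G a b ≤ 1 := by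
  unfold pcCost; split <;> simp

theorem pcCost_adj {a b : V} (h : G.Adj a b) : pcCost G a b = 0 := by
  simp [pcCost, h]

theorem pcCost_not {a b : V} (h : ¬ G.Adj a b) : pcCost G a b = 1 := by
  simp [pcCost, h]

theorem pcBreaks_split (P : List V) (a b : V) (Q : List V) :
    pcBreaks G (P ++ a :: b :: Q) =
      pcBreaks G (P ++ [a]) + pcCost G a b + pcBreaks G (b :: Q) := by
  induction P with
  | nil => simp [pcBreaks]
  | cons x P ih =>
    cases P with
    | nil => simp [pcBreaks]; omega
    | cons y P => simp [pcBreaks] at ih ⊢; omega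

theorem pcBreaks_reverse (l : List V) : pcBreaks G l.reverse = pcBreaks G l := by
  induction l with
  | nil => rfl
  | cons x l ih =>
    cases l with
    | nil => rfl
    | cons y l =>
      have := pcBreaks_split G l.reverse y x []
      simp [pcBreaks] at this ih ⊢
      rw [this, ih, pcCost_comm]; omega

theorem pcBreaks_append_le (l m : List V) :
    pcBreaks G (l ++ m) ≤ pcBreaks G l + pcBreaks G m + 1 := by
  rcases List.eq_nil_or_concat l with rfl | ⟨P, a, rfl⟩
  · simp; omega
  · cases m with
    | nil => simp; omega
    | cons b Q =>
      have := pcBreaks_split G P a b Q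
      have := pcCost_le G a b
      simp
      omega

theorem pcBreaks_chain (l : List V) (h : l.IsChain G.Adj) : pcBreaks G l = 0 := by
  induction l with
  | nil => rfl
  | cons x l ih =>
    cases l with
    | nil => rfl
    | cons y l =>
      rw [List.isChain_cons_cons] at h
      simp [pcBreaks, pcCost_adj G h.1, ih h.2]

theorem pcBreaks_flatten (L : List (List V)) (h : ∀ l ∈ L, l.IsChain G.Adj) :
    pcBreaks G L.flatten ≤ L.length - 1 := by
  induction L with
  | nil => simp [pcBreaks]
  | cons x L ih =>
    have hx := pcBreaks_chain G x (h x (by simp))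
    have ih := ih (fun l hl => h l (by simp [hl]))
    cases L with
    | nil => simp [hx]
    | cons y L =>
      have := pcBreaks_append_le G x (y :: L).flatten
      rw [List.flatten_cons]
      simp only [List.length_cons] at *
      omega

theorem pcBreaks_exists (l : List V) (h : 1 ≤ pcBreaks G l) :
    ∃ P a b Q, l = P ++ a :: b :: Q ∧ ¬ G.Adj a b := by
  by_contra hc
  push Not at hc
  have : l.IsChain G.Adj := by
    rw [List.isChain_iff_forall_rel_of_append_cons_cons]
    intro a b P Q hl
    exact hc P a b Q hl
  have := pcBreaks_chain G l this
  omega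

theorem pc_decompose (l : List V) (hl : l ≠ []) :
    ∃ L : List (List V), L.flatten = l ∧ (∀ x ∈ L, x ≠ [] ∧ x.IsChain G.Adj) ∧
      L.length = pcBreaks G l + 1 := by
  induction l with
  | nil => exact absurd rfl hl
  | cons a l ih =>
    cases l with
    | nil => exact ⟨[[a]], by simp, by simp, by simp [pcBreaks]⟩
    | cons b l =>
      obtain ⟨L, h1, h2, h3⟩ := ih (by simp)
      by_cases hab : G.Adj a b
      · cases L with
        | nil => simp at h1
        | cons x L =>
          have hx := h2 x (by simp)
          cases x with
          | nil => exact absurd rfl hx.1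
          | cons c x =>
            simp at h1
            obtain ⟨rfl, h1⟩ := h1
            refine ⟨(a :: c :: x) :: L, by simp [h1], ?_, ?_⟩
            · intro y hy
              rcases List.mem_cons.1 hy with rfl | hy
              · exact ⟨by simp, List.isChain_cons_cons.2 ⟨hab, hx.2⟩⟩
              · exact h2 y (by simp [hy])
            · simp only [List.length_cons] at h3 ⊢
              simp [pcBreaks, pcCost_adj G hab, h3]
      · refine ⟨[a] :: L, by simp [h1], ?_, ?_⟩
        · intro y hy
          rcases List.mem_cons.1 hy with rfl | hy
          · simp
          · exact h2 y hy
        · simp [pcBreaks, pcCost_not G hab, h3]; omega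

theorem pc_of_list {k : ℕ} (l : List V) (hl : l ≠ []) (hnd : l.Nodup) (hall : ∀ x, x ∈ l)
    (hk : pcBreaks G l + 1 ≤ k) : PathCoverable G k := by
  obtain ⟨L, rfl, h2, h3⟩ := pc_decompose G l hl
  rw [List.nodup_flatten] at hnd
  refine ⟨L.length, fun i => ⟨_, _, SimpleGraph.Walk.ofSupport (L.get i)
    (h2 _ (L.get_mem i)).1 (h2 _ (L.get_mem i)).2⟩, by omega, ?_, ?_, ?_⟩
  · intro i
    rw [SimpleGraph.Walk.isPath_def, SimpleGraph.Walk.support_ofSupport]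
    exact hnd.1 _ (L.get_mem i)
  · intro x
    obtain ⟨y, hy, hx⟩ := List.mem_flatten.1 (hall x)
    obtain ⟨i, rfl⟩ := List.get_of_mem hy
    exact ⟨i, by rw [SimpleGraph.Walk.support_ofSupport]; exact hx⟩
  · intro i j hij x
    rw [SimpleGraph.Walk.support_ofSupport, SimpleGraph.Walk.support_ofSupport]
    intro hi hj
    have := List.pairwise_iff_get.1 hnd.2
    rcases lt_or_gt_of_ne hij with h | h
    · exact this i j h hi hj
    · exact this j i h hj hi

theorem pc_to_list {k : ℕ} [Nonempty V] (h : PathCoverable G k) :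
    ∃ l : List V, l.Nodup ∧ (∀ x, x ∈ l) ∧ pcBreaks G l + 1 ≤ k := by
  obtain ⟨m, P, hm, hp, hc, hd⟩ := h
  refine ⟨(List.ofFn (fun i => (P i).2.2.support)).flatten, ?_, ?_, ?_⟩
  · rw [List.nodup_flatten]
    refine ⟨?_, ?_⟩
    · intro l hl
      obtain ⟨i, rfl⟩ := (List.mem_ofFn' _ _).1 hl
      exact (hp i).support_nodup
    · rw [List.pairwise_ofFn]
      intro i j hij x hi hj
      exact hd i j hij.ne x hi hj
  · intro x
    obtain ⟨i, hi⟩ := hc x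
    exact List.mem_flatten.2 ⟨_, (List.mem_ofFn' _ _).2 ⟨i, rfl⟩, hi⟩
  · have := pcBreaks_flatten G (List.ofFn (fun i => (P i).2.2.support)) (by
      intro l hl
      obtain ⟨i, rfl⟩ := (List.mem_ofFn' _ _).1 hl
      exact SimpleGraph.Walk.isChain_adj_support _)
    rw [List.length_ofFn] at this
    obtain ⟨i, -⟩ := hc (Classical.arbitrary V)
    have := i.2
    omega

theorem pc_count [DecidableRel G.Adj] (u v : V) (l : List V) (hl : l ≠ [])
    (h : ∀ P w x Q, l = P ++ w :: x :: Q →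
      (if G.Adj u w then 1 else 0) + (if G.Adj v x then 1 else 0) + pcCost G w x ≤ 1) :
    l.dropLast.countP (G.Adj u ·) + l.tail.countP (G.Adj v ·) + pcBreaks G l + 1
      ≤ l.length := by
  induction l with
  | nil => exact absurd rfl hl
  | cons a l ih =>
    cases l with
    | nil => simp [pcBreaks]
    | cons b l =>
      have h0 := h [] a b l rfl
      have ih := ih (by simp) (fun P w x Q e => h (a :: P) w x Q (by simp [e]))
      simp only [List.dropLast_cons_cons, List.countP_cons, List.tail_cons, pcBreaks,
        List.length_cons, decide_eq_true_eq] at *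
      omega

theorem pcBreaks_congr (H : SimpleGraph V) (l : List V)
    (h : ∀ P a b Q, l = P ++ a :: b :: Q → (G.Adj a b ↔ H.Adj a b)) :
    pcBreaks G l = pcBreaks H l := by
  induction l with
  | nil => rfl
  | cons a l ih =>
    cases l with
    | nil => rfl
    | cons b l =>
      have h0 := h [] a b l rfl
      have ih := ih (fun P w x Q e => h (a :: P) w x Q (by simp [e]))
      simp only [pcBreaks, ih, pcCost]
      split_ifs <;> tauto

theorem pc_degree [Fintype V] [DecidableRel G.Adj] (w : V) (l : List V) (hnd : l.Nodup)
    (hall : ∀ x, x ∈ l) : l.countP (G.Adj w ·) = G.degree w := by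
  classical
  rw [List.countP_eq_length_filter, ← List.toFinset_card_of_nodup (hnd.filter _),
    ← SimpleGraph.card_neighborFinset_eq_degree]
  congr 1
  ext x
  simp [hall]

theorem pc_suffix (P : List V) (b : V) (B R : List V) (u : V)
    (h : P ++ b :: B = R ++ [u]) : ∃ B1, b :: B = B1 ++ [u] := by
  rcases List.eq_nil_or_concat (b :: B) with h1 | ⟨B1, z, h1⟩
  · simp at h1
  · rw [List.concat_eq_append] at h1
    rw [h1, ← List.append_assoc] at h
    have := (List.append_inj' h rfl).2
    rw [h1, this]
    exact ⟨B1, rfl⟩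

/-- Main step: a Hamiltonian ordering from `v` to `u` with at most `k` breaks. -/
theorem pc_main [Fintype V] [DecidableRel G.Adj] {k : ℕ} (hk : 1 ≤ k) (u v : V)
    (hdeg : Fintype.card V ≤ k + (G.degree u + G.degree v)) (X Y : List V)
    (hnd : ((v :: Y) ++ (X ++ [u])).Nodup) (hall : ∀ x, x ∈ (v :: Y) ++ (X ++ [u]))
    (hb : pcBreaks G ((v :: Y) ++ (X ++ [u])) ≤ k) : PathCoverable G k := by
  classical
  set l := (v :: Y) ++ (X ++ [u]) with hl
  by_contra hno
  have good : ∀ m : List V, m.Perm l → k ≤ pcBreaks G m := by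
    intro m hm
    by_contra hlt
    refine hno (pc_of_list G m ?_ (hm.nodup_iff.2 hnd) (fun x => hm.mem_iff.2 (hall x)) (by omega))
    rintro rfl
    simpa using hm.mem_iff.2 (hall u)
  have hbk : pcBreaks G l = k := le_antisymm hb (good l (List.Perm.refl _))
  have hlen : l.length = Fintype.card V := by
    rw [← List.toFinset_card_of_nodup hnd, ← Finset.card_univ]
    congr 1
    ext x
    simp [hall]
  have hcount := pc_count G u v l (by simp [hl]) ?_
  · have hu := pc_degree G u l hnd hall
    have hv := pc_degree G v l hnd hall
    have e1 : l.countP (G.Adj u ·) = l.dropLast.countP (G.Adj u ·) := by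
      have : l = l.dropLast ++ [u] := by
        rw [hl, ← List.append_assoc, List.dropLast_concat]
      conv_lhs => rw [this]
      simp
    have e2 : l.countP (G.Adj v ·) = l.tail.countP (G.Adj v ·) := by
      simp [hl]
    omega
  · intro P w x Q e
    have hs := pcBreaks_split G P w x Q
    rw [← e, hbk] at hs
    -- the initial segment starts at `v`
    obtain ⟨P1, hP1⟩ : ∃ P1, P ++ [w] = v :: P1 := by
      cases P with
      | nil => simp [hl] at e; exact ⟨[], by simp [e.1]⟩
      | cons p P => simp [hl] at e; exact ⟨P ++ [w], by simp [e.1]⟩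
    obtain ⟨Q1, hQ1⟩ : ∃ Q1, x :: Q = Q1 ++ [u] := by
      apply pc_suffix (P ++ [w]) x Q (v :: Y ++ X) u
      rw [List.append_assoc _ X, ← hl, e]; simp
    have hperm : l = (P ++ [w]) ++ (x :: Q) := by simp [e]
    -- two re-orderings
    have hm1 : ((P ++ [w]).reverse ++ (x :: Q)).Perm l := by
      rw [hperm]; exact (List.reverse_perm _).append_right _
    have hm2 : ((x :: Q) ++ (P ++ [w]).reverse).Perm l :=
      List.perm_append_comm.trans hm1
    have b1 : pcBreaks G ((P ++ [w]).reverse ++ (x :: Q)) =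
        pcBreaks G (P ++ [w]) + pcCost G v x + pcBreaks G (x :: Q) := by
      have := pcBreaks_split G P1.reverse v x Q
      have h3 : P1.reverse ++ [v] = (P ++ [w]).reverse := by rw [hP1]; simp
      rw [h3, pcBreaks_reverse] at this
      rw [← this, ← h3]; simp
    have b2 : pcBreaks G ((x :: Q) ++ (P ++ [w]).reverse) =
        pcBreaks G (P ++ [w]) + pcCost G u w + pcBreaks G (x :: Q) := by
      have := pcBreaks_split G Q1 u w P.reverse
      have h3 : w :: P.reverse = (P ++ [w]).reverse := by simp
      rw [h3, pcBreaks_reverse, ← hQ1] at this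
      have h4 : (x :: Q) ++ (P ++ [w]).reverse = Q1 ++ u :: (P ++ [w]).reverse := by
        rw [hQ1]; simp
      rw [h4, this]; omega
    have g1 := good _ hm1
    have g2 := good _ hm2
    have key : G.Adj u w → G.Adj v x → pcCost G w x = 0 → False := by
      intro hu hv h0
      rw [pcCost_adj G hu] at b2
      obtain ⟨A, a, b, B, hAB, hab⟩ := pcBreaks_exists G
        ((x :: Q) ++ (P ++ [w]).reverse) (by omega)
      have hs2 := pcBreaks_split G A a b B
      rw [← hAB, pcCost_not G hab] at hs2
      have hm3 : ((b :: B) ++ (A ++ [a])).Perm l := by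
        refine List.perm_append_comm.trans ?_
        refine List.Perm.trans ?_ hm2
        rw [hAB]; simp
      have g3 := good _ hm3
      -- first vertex is `x`, last one is `v`
      obtain ⟨A1, hA1⟩ : ∃ A1, A ++ [a] = x :: A1 := by
        cases A with
        | nil => simp at hAB; exact ⟨[], by simp [hAB.1]⟩
        | cons p A => simp at hAB; exact ⟨A ++ [a], by simp [hAB.1]⟩
      obtain ⟨B1, hB1⟩ : ∃ B1, b :: B = B1 ++ [v] := by
        apply pc_suffix (A ++ [a]) b B (x :: Q ++ P1.reverse) v
        have : A ++ [a] ++ b :: B = A ++ a :: b :: B := by simp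
        rw [this, ← hAB, hP1]; simp
      have hs3 := pcBreaks_split G B1 v x A1
      rw [← hA1, ← hB1, pcCost_adj G hv] at hs3
      have h5 : (b :: B) ++ (A ++ [a]) = B1 ++ v :: (A ++ [a]) := by rw [hB1]; simp
      have h6 : pcBreaks G ((b :: B) ++ (A ++ [a])) = pcBreaks G (B1 ++ v :: (A ++ [a])) := by
        rw [h5]
      omega
    have c1 := pcCost_le G w x
    by_cases hu : G.Adj u w <;> by_cases hv : G.Adj v x
    · by_cases h0 : pcCost G w x = 0
      · exact (key hu hv h0).elim
      · rw [pcCost_adj G hu] at b2; omega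
    · rw [pcCost_adj G hu] at b2; simp [hu, hv]; omega
    · rw [pcCost_adj G hv] at b1; simp [hu, hv]; omega
    · simp [hu, hv]; omega

end Helpers

/-- **Lemma 2.3** (Bondy–Chvátal): the property of being k-path-coverable is
`(n-k)`-stable. -/
theorem pathCoverable_stable {n k : ℕ} (G : SimpleGraph (Fin n)) [DecidableRel G.Adj]
    (u v : Fin n) (hne : u ≠ v) (hnadj : ¬G.Adj u v)
    (hdeg : n - k ≤ G.degree u + G.degree v)
    (hcov : PathCoverable (G ⊔ SimpleGraph.edge u v) k) :
    PathCoverable G k := by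
  have : Nonempty (Fin n) := ⟨u⟩
  obtain ⟨l, hnd, hall, hb⟩ := pc_to_list _ hcov
  have hdeg2 : Fintype.card (Fin n) ≤ k + (G.degree u + G.degree v) := by
    rw [Fintype.card_fin]; omega
  have hl : l ≠ [] := by
    rintro rfl
    simpa using hall u
  have adj_iff : ∀ a b, ¬ (a = u ∧ b = v) → ¬ (a = v ∧ b = u) →
      (G.Adj a b ↔ (G ⊔ SimpleGraph.edge u v).Adj a b) := by
    intro a b h1 h2
    simp only [SimpleGraph.sup_adj, SimpleGraph.edge_adj]
    tauto
  have uv_adj : (G ⊔ SimpleGraph.edge u v).Adj u v := by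
    simp [SimpleGraph.sup_adj, SimpleGraph.edge_adj, hne]
  -- the case where the new edge is used
  have step : ∀ X Y : List (Fin n), (X ++ u :: v :: Y).Nodup → (∀ x, x ∈ X ++ u :: v :: Y) →
      pcBreaks (G ⊔ SimpleGraph.edge u v) (X ++ u :: v :: Y) + 1 ≤ k → PathCoverable G k := by
    intro X Y hnd hall hb
    have hperm : ((v :: Y) ++ (X ++ [u])).Perm (X ++ u :: v :: Y) := by
      refine List.perm_append_comm.trans ?_
      simp
    rw [pcBreaks_split, pcCost_adj _ uv_adj] at hb
    have hnd2 := hperm.nodup_iff.2 hnd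
    have hnu : u ∉ v :: Y := fun h => (List.disjoint_of_nodup_append hnd2) h (by simp)
    have hnv : v ∉ X ++ [u] := fun h => (List.disjoint_of_nodup_append hnd2) (by simp) h
    have c1 : pcBreaks G (v :: Y) = pcBreaks (G ⊔ SimpleGraph.edge u v) (v :: Y) := by
      apply pcBreaks_congr
      intro P a b Q e
      rw [e] at hnu
      apply adj_iff
      · rintro ⟨rfl, -⟩; exact hnu (by simp)
      · rintro ⟨-, rfl⟩; exact hnu (by simp)
    have c2 : pcBreaks G (X ++ [u]) = pcBreaks (G ⊔ SimpleGraph.edge u v) (X ++ [u]) := by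
      apply pcBreaks_congr
      intro P a b Q e
      rw [e] at hnv
      apply adj_iff
      · rintro ⟨-, rfl⟩; exact hnv (by simp)
      · rintro ⟨rfl, -⟩; exact hnv (by simp)
    have c3 := pcBreaks_append_le G (v :: Y) (X ++ [u])
    exact pc_main G (by omega) u v hdeg2 X Y hnd2 (fun x => hperm.mem_iff.2 (hall x)) (by omega)
  by_cases h1 : ∃ X Y, l = X ++ u :: v :: Y
  · obtain ⟨X, Y, rfl⟩ := h1
    exact step X Y hnd hall hb
  by_cases h2 : ∃ X Y, l = X ++ v :: u :: Y
  · obtain ⟨X, Y, rfl⟩ := h2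
    have er : (X ++ v :: u :: Y).reverse = Y.reverse ++ u :: v :: X.reverse := by simp
    apply step Y.reverse X.reverse
    · rw [← er]; exact List.nodup_reverse.2 hnd
    · intro x; rw [← er]; exact List.mem_reverse.2 (hall x)
    · rw [← er, pcBreaks_reverse]; exact hb
  · refine pc_of_list G l hl hnd hall ?_
    rw [pcBreaks_congr G (G ⊔ SimpleGraph.edge u v) l]
    · exact hb
    · intro P a b Q e
      apply adj_iff
      · rintro ⟨rfl, rfl⟩; exact h1 ⟨P, Q, e⟩
      · rintro ⟨rfl, rfl⟩; exact h2 ⟨P, Q, e⟩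
end

section
/- Let k ≥ 1 and δ ≥ 1 be integers, and let G be a simple graph of order n ≥ 8δ + 6k + 7 with minimum degree δ(G) ≥ δ and e(G) > (1/2)(n − k − δ − 1)(n − k − δ − 2) + (δ + k + 1)(δ + 1). If the (n−k)-closure G′ = cl_{n−k}(G) is not k-path-coverable, then the clique number of G′ equals n − δ − k. -/
open Finset Matrix

lemma aux_path {n : ℕ} (H : SimpleGraph (Fin n)) (hH : ∀ u v, u ≠ v → H.Adj u v)
    (s : Finset (Fin n)) (hs : s.Nonempty) :
    ∃ (u v : Fin n) (p : H.Walk u v), p.IsPath ∧ ∀ w, w ∈ p.support ↔ w ∈ s := by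
  induction hs using Finset.Nonempty.cons_induction with
  | singleton a => exact ⟨a, a, SimpleGraph.Walk.nil, by simp, by simp⟩
  | cons a s ha hs ih =>
    obtain ⟨u, v, p, hp, hw⟩ := ih
    have hu : u ∈ s := (hw u).1 p.start_mem_support
    have hau : a ≠ u := fun h => ha (h ▸ hu)
    refine ⟨a, v, SimpleGraph.Walk.cons (hH a u hau) p, ?_, ?_⟩
    · rw [SimpleGraph.Walk.cons_isPath_iff]
      exact ⟨hp, fun h => ha ((hw a).1 h)⟩
    · intro w
      simp [hw]

lemma aux_coverable {n k : ℕ} (hk : 1 ≤ k) (hn : 0 < n) (H : SimpleGraph (Fin n))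
    (hH : ∀ u v, u ≠ v → H.Adj u v) : PathCoverable H k := by
  obtain ⟨u, v, p, hp, hw⟩ := aux_path H hH Finset.univ ⟨⟨0, hn⟩, Finset.mem_univ _⟩
  refine ⟨1, fun _ => ⟨u, v, p⟩, hk, fun _ => hp, fun w => ⟨0, ?_⟩, ?_⟩
  · simp [hw]
  · intro i j hij
    exact absurd (Subsingleton.elim i j) hij

/-- The degree sum over a clique is at most `t(t-1)` plus the outside degree sum. -/
lemma aux_clique_sum {n : ℕ} (H : SimpleGraph (Fin n)) [DecidableRel H.Adj]
    (C : Finset (Fin n)) :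
    ∑ v ∈ C, H.degree v ≤ C.card * (C.card - 1) + ∑ v ∈ Cᶜ, H.degree v := by
  have h1 : ∀ v ∈ C, H.degree v ≤ (C.card - 1) + (Finset.bipartiteAbove H.Adj Cᶜ v).card := by
    intro v hv
    rw [← Finset.card_erase_of_mem hv, ← SimpleGraph.card_neighborFinset_eq_degree]
    refine le_trans (Finset.card_le_card ?_) (Finset.card_union_le _ _)
    intro w hw
    rw [SimpleGraph.mem_neighborFinset] at hw
    by_cases hwC : w ∈ C
    · exact Finset.mem_union_left _ (Finset.mem_erase.2 ⟨hw.ne', hwC⟩)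
    · refine Finset.mem_union_right _ ?_
      simp [Finset.mem_bipartiteAbove, hwC, hw]
  have h2 := Finset.sum_card_bipartiteAbove_eq_sum_card_bipartiteBelow (s := C) (t := Cᶜ) H.Adj
  have h3 : ∀ v ∈ Cᶜ, (Finset.bipartiteBelow H.Adj C v).card ≤ H.degree v := by
    intro v _
    rw [← SimpleGraph.card_neighborFinset_eq_degree]
    refine Finset.card_le_card ?_
    intro w hw
    rw [Finset.mem_bipartiteBelow] at hw
    rw [SimpleGraph.mem_neighborFinset]
    exact hw.2.symm
  calc _ ≤ ∑ v ∈ C, ((C.card - 1) + (Finset.bipartiteAbove H.Adj Cᶜ v).card) :=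
        Finset.sum_le_sum h1
    _ = C.card * (C.card - 1) + ∑ v ∈ Cᶜ, (Finset.bipartiteBelow H.Adj C v).card := by
        rw [Finset.sum_add_distrib, h2]; simp
    _ ≤ _ := by gcongr with v hv; exact h3 v hv

/-- The clique-number step in the proof of Lemma 3.1: if `H` is the `(n-k)`-closure of `G`
(characterized as the smallest supergraph of `G` in which nonadjacent vertices have degree
sum less than `n-k`) and `H` is not k-path-coverable, then `ω(H) = n - δ - k`. -/
theorem closure_cliqueNum (k δ n : ℕ) (hk : 1 ≤ k) (hδ : 1 ≤ δ)
    (hn : 8 * δ + 6 * k + 7 ≤ n)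
    (G H : SimpleGraph (Fin n)) [DecidableRel G.Adj] [DecidableRel H.Adj]
    (hmin : ∀ v, δ ≤ G.degree v)
    (he : (1 / 2 : ℝ) * ((n : ℝ) - k - δ - 1) * ((n : ℝ) - k - δ - 2)
        + ((δ : ℝ) + k + 1) * ((δ : ℝ) + 1) < (G.edgeFinset.card : ℝ))
    (hGH : G ≤ H)
    (hclosed : ∀ u v : Fin n, u ≠ v → ¬H.Adj u v → H.degree u + H.degree v < n - k)
    (hsmallest : ∀ (H' : SimpleGraph (Fin n)) [DecidableRel H'.Adj], G ≤ H' →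
        (∀ u v : Fin n, u ≠ v → ¬H'.Adj u v → H'.degree u + H'.degree v < n - k) →
        H ≤ H')
    (hnc : ¬PathCoverable H k) :
    H.cliqueNum = n - δ - k := by
  obtain ⟨C, hC⟩ := H.exists_isNClique_cliqueNum
  have hmax : ∀ D : Finset (Fin n), H.IsClique D → D.card ≤ C.card := by
    intro D hD
    rw [hC.card_eq]
    exact hD.card_le_cliqueNum
  rw [← hC.card_eq]
  have hCc := hC.isClique
  have hminH : ∀ v, δ ≤ H.degree v := fun v =>
    (hmin v).trans (SimpleGraph.degree_le_of_le hGH)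
  have hCdeg : ∀ v ∈ C, C.card - 1 ≤ H.degree v := by
    intro v hv
    rw [← Finset.card_erase_of_mem hv, ← SimpleGraph.card_neighborFinset_eq_degree]
    refine Finset.card_le_card ?_
    intro w hw
    rw [Finset.mem_erase] at hw
    rw [SimpleGraph.mem_neighborFinset]
    exact hCc hv hw.2 hw.1.symm
  have hCn : C.card ≤ n := by simpa using Finset.card_le_univ C
  -- outside vertices
  have hout : ∀ v ∉ C, ∃ u ∈ C, u ≠ v ∧ ¬ H.Adj u v := by
    intro v hv
    by_contra! hcon
    have hins : H.IsClique (insert v C : Finset (Fin n)) := by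
      rw [Finset.coe_insert, SimpleGraph.isClique_insert]
      exact ⟨hCc, fun b hb hne => (hcon b hb (Ne.symm hne)).symm⟩
    have := hmax _ hins
    rw [Finset.card_insert_of_notMem hv] at this
    omega
  have hCpos : 1 ≤ C.card := by
    have := hmax {⟨0, by omega⟩} (by simp)
    simpa using this
  have houtdeg : ∀ v ∉ C, H.degree v + C.card ≤ n - k := by
    intro v hv
    obtain ⟨u, hu, hne, hadj⟩ := hout v hv
    have h1 := hclosed u v hne hadj
    have h2 := hCdeg u hu
    omega
  apply le_antisymm
  · by_contra! hlt
    apply hnc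
    refine aux_coverable hk (by omega) H ?_
    have hall : ∀ v, v ∈ C := by
      intro v
      by_contra hv
      have := houtdeg v hv
      have := hminH v
      omega
    intro u v huv
    exact hCc (hall u) (hall v) huv
  · by_contra! hlt
    -- edge counting
    have hsum : ∑ v, H.degree v = 2 * H.edgeFinset.card := H.sum_degrees_eq_twice_card_edges
    have hGe : G.edgeFinset.card ≤ H.edgeFinset.card :=
      Finset.card_le_card (SimpleGraph.edgeFinset_mono hGH)
    have hGe' : (2 : ℝ) * G.edgeFinset.card ≤ ∑ v, (H.degree v : ℝ) := by
      have : 2 * G.edgeFinset.card ≤ ∑ v, H.degree v := by omega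
      exact_mod_cast this
    have hkn : k ≤ n := by omega
    set t := C.card with ht
    have hltR : (t : ℝ) + δ + k + 1 ≤ n := by
      have : t + δ + k + 1 ≤ n := by omega
      exact_mod_cast this
    have hnR : 8 * (δ : ℝ) + 6 * k + 7 ≤ n := by exact_mod_cast hn
    have hkR : (1 : ℝ) ≤ k := by exact_mod_cast hk
    have hδR : (1 : ℝ) ≤ δ := by exact_mod_cast hδ
    by_cases hcase : n + k + 3 * δ + 4 ≤ 3 * t
    · have hcaseR : (n : ℝ) + k + 3 * δ + 4 ≤ 3 * t := by exact_mod_cast hcase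
      have h1 := aux_clique_sum H C
      rw [← ht] at h1
      have h1R : ∑ v ∈ C, (H.degree v : ℝ) ≤ t * ((t : ℝ) - 1) + ∑ v ∈ Cᶜ, (H.degree v : ℝ) := by
        have : ((∑ v ∈ C, H.degree v : ℕ) : ℝ) ≤
            ((t * (t - 1) + ∑ v ∈ Cᶜ, H.degree v : ℕ) : ℝ) := by exact_mod_cast h1
        push_cast [Nat.cast_sub hCpos] at this
        exact this
      have h2 : ∑ v ∈ Cᶜ, (H.degree v : ℝ) ≤ ((n : ℝ) - t) * ((n : ℝ) - k - t) := by
        have hb : ∀ v ∈ Cᶜ, (H.degree v : ℝ) ≤ (n : ℝ) - k - t := by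
          intro v hv
          have h3 := houtdeg v (by simpa using hv)
          have h4 : H.degree v + t + k ≤ n := by omega
          have h5 : (H.degree v : ℝ) + t + k ≤ n := by exact_mod_cast h4
          linarith
        have := Finset.sum_le_card_nsmul _ _ _ hb
        rw [Finset.card_compl, Fintype.card_fin, nsmul_eq_mul, Nat.cast_sub hCn] at this
        exact this
      have h3 : ∑ v, (H.degree v : ℝ) = ∑ v ∈ C, (H.degree v : ℝ) + ∑ v ∈ Cᶜ, (H.degree v : ℝ) :=
        (Finset.sum_add_sum_compl C _).symm
      nlinarith [mul_nonneg (sub_nonneg.2 hltR) (sub_nonneg.2 hcaseR)]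
    · have hcaseR : 3 * (t : ℝ) ≤ n + k + 3 * δ + 4 := by
        have : 3 * t ≤ n + k + 3 * δ + 4 := by omega
        exact_mod_cast this
      let K : Finset (Fin n) := Finset.univ.filter fun v => n - k ≤ 2 * H.degree v
      have hK : H.IsClique K := by
        intro u hu v hv huv
        simp only [K, Finset.coe_filter, Set.mem_ofPred_eq, Finset.mem_univ, true_and] at hu hv
        by_contra hadj
        have := hclosed u v huv hadj
        omega
      have hKt : K.card ≤ t := hmax K hK
      have hKn : K.card ≤ n := by simpa using Finset.card_le_univ K
      have hKtR : (K.card : ℝ) ≤ t := by exact_mod_cast hKt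
      have h1 : ∑ v ∈ K, (H.degree v : ℝ) ≤ K.card * ((n : ℝ) - 1) := by
        have hb : ∀ v ∈ K, (H.degree v : ℝ) ≤ (n : ℝ) - 1 := by
          intro v _
          have h3 := H.degree_lt_card_verts v
          rw [Fintype.card_fin] at h3
          have h5 : (H.degree v : ℝ) + 1 ≤ n := by exact_mod_cast h3
          linarith
        have := Finset.sum_le_card_nsmul _ _ _ hb
        rwa [nsmul_eq_mul] at this
      have h2 : ∑ v ∈ Kᶜ, (H.degree v : ℝ) ≤ ((n : ℝ) - K.card) * (((n : ℝ) - k - 1) / 2) := by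
        have hb : ∀ v ∈ Kᶜ, (H.degree v : ℝ) ≤ ((n : ℝ) - k - 1) / 2 := by
          intro v hv
          simp only [K, Finset.mem_compl, Finset.mem_filter, Finset.mem_univ, true_and] at hv
          have h4 : 2 * H.degree v + k + 1 ≤ n := by omega
          have h5 : 2 * (H.degree v : ℝ) + k + 1 ≤ n := by exact_mod_cast h4
          linarith
        have := Finset.sum_le_card_nsmul _ _ _ hb
        rw [Finset.card_compl, Fintype.card_fin, nsmul_eq_mul, Nat.cast_sub hKn] at this
        exact this
      have h3 : ∑ v, (H.degree v : ℝ) = ∑ v ∈ K, (H.degree v : ℝ) + ∑ v ∈ Kᶜ, (H.degree v : ℝ) :=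
        (Finset.sum_add_sum_compl K _).symm
      have h4 : 3 * (K.card : ℝ) ≤ n + k + 3 * δ + 4 := by linarith
      have h5 : 0 ≤ ((n : ℝ) + k + 3 * δ + 4 - 3 * K.card) * ((n : ℝ) + k - 1) :=
        mul_nonneg (by linarith) (by linarith)
      obtain ⟨m, hm⟩ : ∃ m : ℝ, m = n - (8 * (δ : ℝ) + 6 * k + 7) := ⟨_, rfl⟩
      have hm0 : 0 ≤ m := by linarith
      have hnm : (n : ℝ) = m + 8 * (δ : ℝ) + 6 * k + 7 := by linarith
      generalize (K.card : ℝ) = c at *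
      rw [hnm] at h1 h2 h5 he
      have p1 := mul_nonneg hm0 hm0
      have p2 := mul_nonneg hm0 (sub_nonneg.2 hkR)
      have p3 := mul_nonneg hm0 (sub_nonneg.2 hδR)
      have p4 := mul_nonneg (sub_nonneg.2 hkR) (sub_nonneg.2 hδR)
      have p5 := mul_nonneg (sub_nonneg.2 hkR) (sub_nonneg.2 hkR)
      have p6 := mul_nonneg (sub_nonneg.2 hδR) (sub_nonneg.2 hδR)
      nlinarith
end

section
/- Let k ≥ 1 and δ ≥ 2 be integers and let n be such that n − 2δ − k ≥ 1. For every graph G in the family 𝓑₁(n,k,δ), the Q-index satisfies q(G) ≥ 2(n − k − δ − 1). -/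
open Finset Matrix

lemma qaux_rayleigh {n : ℕ} (G : SimpleGraph (Fin n)) [DecidableRel G.Adj] (x : Fin n → ℝ) :
    x ⬝ᵥ (signlessLaplacian G *ᵥ x) ≤ qIndex G * (x ⬝ᵥ x) := by
  set Q := signlessLaplacian G with hQ
  have hsymm : Qᵀ = Q := by
    simp [hQ, signlessLaplacian, Matrix.transpose_add]
  have hfin : {μ : ℝ | ∃ x : Fin n → ℝ, x ≠ 0 ∧ Q *ᵥ x = μ • x}.Finite := by
    refine (Module.End.finite_hasEigenvalue (Matrix.toLin' Q)).subset ?_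
    rintro μ ⟨x, hx, h⟩
    exact Module.End.hasEigenvalue_of_hasEigenvector (x := x)
      ⟨Module.End.mem_eigenspace_iff.2 (by simpa using h), hx⟩
  have hle : ∀ μ : ℝ, ∀ x : Fin n → ℝ, x ≠ 0 → Q *ᵥ x = μ • x → μ ≤ qIndex G :=
    fun μ x hx h => le_csSup hfin.bddAbove ⟨x, hx, h⟩
  set M := qIndex G
  have hH : (M • (1 : Matrix (Fin n) (Fin n) ℝ) - Q).IsHermitian := by
    rw [Matrix.IsHermitian, Matrix.conjTranspose_eq_transpose_of_trivial]
    simp [Matrix.transpose_sub, hsymm]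
  have hP : (M • (1 : Matrix (Fin n) (Fin n) ℝ) - Q).PosSemidef := by
    rw [hH.posSemidef_iff_eigenvalues_nonneg]
    intro i
    have h1 := hH.mulVec_eigenvectorBasis i
    have h2 : (hH.eigenvectorBasis i : EuclideanSpace ℝ (Fin n)).ofLp ≠ 0 := by
      intro h
      have := hH.eigenvectorBasis.orthonormal.ne_zero i
      exact this (by ext j; simpa using congrFun h j)
    have h3 := hle (M - hH.eigenvalues i) _ h2 (by
      rw [Matrix.sub_mulVec, Matrix.smul_mulVec, Matrix.one_mulVec] at h1
      rw [sub_smul, ← h1]; simp)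
    simp only [Pi.zero_apply]
    linarith
  have h := hP.dotProduct_mulVec_nonneg x
  rw [Matrix.sub_mulVec, Matrix.smul_mulVec, Matrix.one_mulVec, dotProduct_sub,
    dotProduct_smul] at h
  simp only [star_trivial, smul_eq_mul] at h
  linarith

lemma qaux_form {n : ℕ} (G : SimpleGraph (Fin n)) [DecidableRel G.Adj] (x : Fin n → ℝ) :
    x ⬝ᵥ (signlessLaplacian G *ᵥ x)
      = ∑ u, ∑ v, (if G.Adj u v then x u * (x u + x v) else 0) := by
  have hdeg : ∀ u, (G.degree u : ℝ) = ∑ v, if G.Adj u v then (1 : ℝ) else 0 := by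
    intro u
    rw [Finset.sum_boole, ← SimpleGraph.card_neighborFinset_eq_degree,
      SimpleGraph.neighborFinset_eq_filter]
  rw [signlessLaplacian, Matrix.add_mulVec, dotProduct]
  refine Finset.sum_congr rfl fun u _ => ?_
  rw [Pi.add_apply, Matrix.mulVec_diagonal, hdeg, Matrix.mulVec, dotProduct, Finset.sum_mul,
    ← Finset.sum_add_distrib, Finset.mul_sum]
  refine Finset.sum_congr rfl fun v _ => ?_
  rw [SimpleGraph.adjMatrix_apply]
  split_ifs <;> ring

lemma qaux_edges {n : ℕ} (E : Finset (Sym2 (Fin n))) :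
    (∑ u : Fin n, ∑ v : Fin n, if s(u, v) ∈ E then (1 : ℝ) else 0) ≤ 2 * (E.card : ℝ) := by
  rw [← Finset.sum_product', Finset.sum_boole]
  have := Finset.card_le_mul_card_image_of_maps_to
    (s := (univ ×ˢ univ : Finset (Fin n × Fin n)).filter fun p => s(p.1, p.2) ∈ E)
    (t := E) (f := fun p => s(p.1, p.2)) (by intro p hp; simpa using hp) 2 (by
      intro e _
      induction e using Sym2.ind with
      | _ a b =>
        refine (Finset.card_le_card (t := {(a, b), (b, a)}) ?_).trans Finset.card_le_two
        rintro ⟨u, v⟩ hp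
        simp only [Finset.mem_filter, Sym2.eq_iff] at hp
        simp only [Finset.mem_insert, Finset.mem_singleton, Prod.mk.injEq]
        exact hp.2)
  exact_mod_cast this

lemma qaux_count {n m : ℕ} (h : m ≤ n) :
    (∑ u : Fin n, if (u : ℕ) < m then (1 : ℝ) else 0) = m := by
  rw [Fin.sum_univ_eq_sum_range (fun u => if u < m then (1 : ℝ) else 0), Finset.sum_boole]
  congr 1
  rw [show (Finset.range n).filter (fun u => u < m) = Finset.range m by ext; simp; omega]
  simp

/-- **Lemma 3.2**: every graph in the family `𝓑₁(n,k,δ)` has Q-index at least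
`2(n-k-δ-1)`. -/
theorem qIndex_ge_of_inB1 (k δ n : ℕ) (hk : 1 ≤ k) (hδ : 2 ≤ δ)
    (hn : 2 * δ + k + 1 ≤ n)
    (G : SimpleGraph (Fin n)) [DecidableRel G.Adj] (hG : InB1 n k δ G) :
    2 * ((n : ℝ) - k - δ - 1) ≤ qIndex G := by
  obtain ⟨E, hE, hcard, ⟨f⟩⟩ := hG
  obtain ⟨m, hm⟩ : ∃ m, m = n - (δ + k) := ⟨_, rfl⟩
  have hmn : n = m + (δ + k) := by omega
  have hmR : (n : ℝ) = m + (δ + k) := by exact_mod_cast hmn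
  have hmpos : (0 : ℝ) < m := by exact_mod_cast (show 0 < m by omega)
  let y : Fin n → ℝ := fun v => if (v : ℕ) < m then 1 else 0
  let d : Fin n → ℝ := fun v => if (v : ℕ) < δ then 1 else 0
  have hy : ∑ u, y u = m := qaux_count (by omega)
  have hd : ∑ u, d u = δ := qaux_count (by omega)
  have hyy : ∀ u, y u * y u = y u := by intro u; simp only [y]; split_ifs <;> simp
  have hR := qaux_rayleigh G (fun v => y (f v))
  have hnorm : (fun v => y (f v)) ⬝ᵥ (fun v => y (f v)) = m := by
    rw [dotProduct, ← hy, ← Equiv.sum_comp f.toEquiv y]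
    exact Finset.sum_congr rfl fun u _ => hyy _
  rw [hnorm, qaux_form] at hR
  let H := (Bgraph n k δ).deleteEdges ↑E
  have hre : (∑ u, ∑ v, (if G.Adj u v then y (f u) * (y (f u) + y (f v)) else 0))
      = ∑ u, ∑ v, (if H.Adj u v then y u * (y u + y v) else 0) := by
    rw [← Equiv.sum_comp f.toEquiv
      (fun u => ∑ v, (if H.Adj u v then y u * (y u + y v) else 0))]
    refine Finset.sum_congr rfl fun u _ => ?_
    rw [← Equiv.sum_comp f.toEquiv
      (fun v => if H.Adj (f.toEquiv u) v then y (f.toEquiv u) * (y (f.toEquiv u) + y v) else 0)]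
    refine Finset.sum_congr rfl fun v _ => ?_
    have : H.Adj (f u) (f v) ↔ G.Adj u v := f.map_adj_iff
    simp only [RelIso.coe_fn_toEquiv, this]
  rw [hre] at hR
  have hpt : ∀ u v : Fin n, 2 * (y u * y v) - 2 * (if u = v then y u else 0)
      - 2 * (if s(u, v) ∈ E then (1 : ℝ) else 0) + d u * (1 - y v)
      ≤ (if H.Adj u v then y u * (y u + y v) else 0) := by
    intro u v
    have hadj : H.Adj u v ↔ (u ≠ v ∧ ((u : ℕ) < δ ∨ (v : ℕ) < δ ∨
      ((u : ℕ) < m ∧ (v : ℕ) < m))) ∧ s(u, v) ∉ E := by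
      simp only [H, SimpleGraph.deleteEdges_adj, Bgraph, Finset.mem_coe, hm]
    have hEm : s(u, v) ∈ E → (u : ℕ) < m ∧ (v : ℕ) < m := by
      intro h
      have := (hE _ h).2
      rw [hm]
      exact ⟨this u (by simp), this v (by simp)⟩
    have hδm : δ < m := by omega
    simp only [hadj, y, d]
    by_cases huv : u = v
    · subst huv
      by_cases h1 : (u : ℕ) < m <;> by_cases h2 : (u : ℕ) < δ <;> by_cases h3 : s(u, u) ∈ E <;>
        simp [h1, h2, h3] <;> first | omega | norm_num
    · by_cases h3 : s(u, v) ∈ E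
      · simp [h3, huv, hEm h3]
      · by_cases h1 : (u : ℕ) < m <;> by_cases h2 : (u : ℕ) < δ <;> by_cases h4 : (v : ℕ) < m <;>
          by_cases h5 : (v : ℕ) < δ <;>
          simp [h1, h2, h3, h4, h5, huv] <;> first | omega | norm_num
  have hsum := Finset.sum_le_sum fun u (_ : u ∈ (univ : Finset (Fin n))) =>
    Finset.sum_le_sum fun v (_ : v ∈ (univ : Finset (Fin n))) => hpt u v
  have hlhs : (∑ u, ∑ v, (2 * (y u * y v) - 2 * (if u = v then y u else 0)
      - 2 * (if s(u, v) ∈ E then (1 : ℝ) else 0) + d u * (1 - y v)))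
      = 2 * (m * m) - 2 * m - 2 * (∑ u, ∑ v, if s(u, v) ∈ E then (1 : ℝ) else 0)
        + δ * (n - m) := by
    simp only [Finset.sum_add_distrib, Finset.sum_sub_distrib, ← Finset.mul_sum,
      ← Finset.sum_mul, Finset.sum_ite_eq, Finset.mem_univ, if_true, hy, hd]
    simp
  rw [hlhs] at hsum
  have hedge := qaux_edges E
  have hc : (4 : ℝ) * E.card ≤ δ * (δ + k) := by
    exact_mod_cast (show 4 * E.card ≤ δ * (δ + k) by omega)
  have hfinal : 2 * ((m : ℝ) - 1) * m ≤ qIndex G * m := by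
    rw [hmR] at hsum
    nlinarith
  have := le_of_mul_le_mul_right hfinal hmpos
  rw [hmR]
  linarith
end
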